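/- arXiv:1809.05009 — 3 statements merged into one kernel-verified Lean document; each statement's English description precedes it below -/
import Mathlib

section
/- For every instance of P|partition|ΣC_j and every feasible preemptive schedule S, there exists a feasible non-preemptive schedule whose total completion time is at most the total completion time of S. Consequently, allowing preemption does not decrease the optimal total completion time. -/
open Filter Topology in
/-- A schedule of pieces (possibly of zero length) with explicit endpoints. -/
def PieceOk {I J R : Type} [Fintype I] [DecidableEq J] (m : ℕ) (p : J → ℝ) (r : J → R)
    (job : I → J) (μ : I → Fin m) (a b : I → ℝ) : Prop :=
  (∀ i, 0 ≤ a i) ∧ (∀ i, a i ≤ b i) ∧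
  (∀ i k, i ≠ k → (μ i = μ k ∨ r (job i) = r (job k)) → min (b i) (b k) ≤ max (a i) (a k)) ∧
  ∀ j, ∑ i with job i = j, (b i - a i) = p j

lemma order_of_disj {a b c d : ℝ} (h : min b d ≤ max a c) (h1 : a < b) (h2 : c < d) :
    b ≤ c ∨ d ≤ a := by
  rcases min_le_iff.1 h with h | h <;> rcases le_max_iff.1 h with h | h
  · linarith
  · exact Or.inl h
  · exact Or.inr h
  · linarith

/-- Swapping the tails of two machines. -/
lemma swap_step {I J R : Type} [Fintype I] [DecidableEq J] {m : ℕ} {p : J → ℝ} {r : J → R}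
    {job : I → J} {μ : I → Fin m} {a b : I → ℝ} (h : PieceOk m p r job μ a b)
    {x y : I} (hx : a x < b x) (hy : a y < b y) (hr : r (job x) = r (job y))
    (hxy : b x = a y) (hne : μ x ≠ μ y) :
    ∃ μ' : I → Fin m, PieceOk m p r job μ' a b ∧ μ' x = μ' y ∧
      ∀ i k, a i < b i → a k < b k → r (job i) = r (job k) → b i = a k → μ i = μ k →
        μ' i = μ' k := by
  obtain ⟨h0, hab, hd, hs⟩ := h
  have ord : ∀ i k, i ≠ k → (μ i = μ k ∨ r (job i) = r (job k)) → a i < b i → a k < b k →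
      b i ≤ a k ∨ b k ≤ a i := fun i k h1 h2 h3 h4 => order_of_disj (hd i k h1 h2) h3 h4
  have key : ∀ i k, a i < b i → a k < b k → b x ≤ a i → a k < b x →
      Equiv.swap (μ x) (μ y) (μ i) = μ k → i ≠ k → b k ≤ a i := by
    intro i k hi hk hi' hk' hsw hik
    by_cases h1 : μ i = μ x
    · rw [h1, Equiv.swap_apply_left] at hsw
      have hky : k ≠ y := by rintro rfl; linarith
      rcases ord k y hky (Or.inl hsw.symm) hk hy with h | h <;> linarith
    by_cases h2 : μ i = μ y
    · rw [h2, Equiv.swap_apply_right] at hsw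
      by_cases hkx : k = x
      · subst hkx; exact hi'
      rcases ord k x hkx (Or.inl hsw.symm) hk hx with h | h <;> linarith
    · rw [Equiv.swap_apply_of_ne_of_ne h1 h2] at hsw
      rcases ord i k hik (Or.inl hsw) hi hk with h | h <;> linarith
  refine ⟨fun i => if b x ≤ a i then Equiv.swap (μ x) (μ y) (μ i) else μ i,
    ⟨h0, hab, ?_, hs⟩, ?_, ?_⟩
  · intro i k hik hc
    rcases (hab i).eq_or_lt with hi | hi
    · rw [← hi]; exact (min_le_left _ _).trans (le_max_left _ _)
    rcases (hab k).eq_or_lt with hk | hk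
    · rw [← hk]; exact (min_le_right _ _).trans (le_max_right _ _)
    rcases hc with hc | hc
    swap
    · exact hd i k hik (Or.inr hc)
    dsimp only at hc
    split_ifs at hc with h1 h2 h2
    · exact hd i k hik (Or.inl ((Equiv.swap _ _).injective hc))
    · exact (min_le_right _ _).trans
        ((key i k hi hk h1 (not_le.1 h2) hc hik).trans (le_max_left _ _))
    · exact (min_le_left _ _).trans
        ((key k i hk hi h2 (not_le.1 h1) hc.symm hik.symm).trans (le_max_right _ _))
    · exact hd i k hik (Or.inl hc)
  · have h1 : ¬ b x ≤ a x := not_le.2 hx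
    simp [h1, hxy.le]
  · intro i k hi hk hrr hik hm
    dsimp only
    split_ifs with h1 h2 h2
    · rw [hm]
    · linarith
    · have hbx : μ k ≠ μ x := by
        intro hkx
        by_cases hix : i = x
        · subst hix
          by_cases hky : k = y
          · subst hky; exact hne hm
          rcases ord k y hky (Or.inr (hrr.symm.trans hr)) hk hy with h | h <;> linarith
        · rcases ord i x hix (Or.inl (hm.trans hkx)) hi hx with h | h <;> linarith
      have hby : μ k ≠ μ y := by
        intro hky'
        by_cases hky : k = y
        · subst hky
          by_cases hix : i = x
          · subst hix; exact hne hm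
          rcases ord i x hix (Or.inr (hrr.trans hr.symm)) hi hx with h | h <;> linarith
        · have hiy : i ≠ y := by rintro rfl; linarith
          rcases ord i y hiy (Or.inl (hm.trans hky')) hi hy with h | h
          · rcases ord k y hky (Or.inl hky') hk hy with h | h <;> linarith
          · linarith
      rw [Equiv.swap_apply_of_ne_of_ne hbx hby, hm]
    · exact hm

/-- One can choose the machine assignment such that consecutive pieces of one resource without
a gap in between are on the same machine. -/
lemma exists_normal {I J R : Type} [Fintype I] [DecidableEq J] {m : ℕ} {p : J → ℝ} {r : J → R}
    {job : I → J} {μ : I → Fin m} {a b : I → ℝ} (h : PieceOk m p r job μ a b) :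
    ∃ μ : I → Fin m, PieceOk m p r job μ a b ∧
      ∀ x y, a x < b x → a y < b y → r (job x) = r (job y) → b x = a y → μ x = μ y := by
  classical
  let F : (I → Fin m) → Finset (I × I) := fun μ => Finset.univ.filter fun q =>
    a q.1 < b q.1 ∧ a q.2 < b q.2 ∧ r (job q.1) = r (job q.2) ∧ b q.1 = a q.2 ∧ μ q.1 = μ q.2
  obtain ⟨ν, hν, hmax⟩ := Set.exists_max_image {μ | PieceOk m p r job μ a b}
    (fun μ => (F μ).card) (Set.toFinite _) ⟨μ, h⟩
  refine ⟨ν, hν, ?_⟩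
  intro x y hx hy hr hxy
  by_contra hne
  obtain ⟨ν', hok, he, hpres⟩ := swap_step hν hx hy hr hxy hne
  have hlt : (F ν).card < (F ν').card := by
    apply Finset.card_lt_card
    rw [Finset.ssubset_iff_of_subset]
    · exact ⟨(x, y), Finset.mem_filter.2 ⟨Finset.mem_univ _, hx, hy, hr, hxy, he⟩, by simp [F, hne]⟩
    · intro q hq
      simp only [F, Finset.mem_filter, Finset.mem_univ, true_and] at hq ⊢
      obtain ⟨h1, h2, h3, h4, h5⟩ := hq
      exact ⟨h1, h2, h3, h4, hpres _ _ h1 h2 h3 h4 h5⟩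
  exact absurd (hmax ν' hok) (not_le.2 hlt)

open Filter Topology in
lemma ev_lt {u v s t : ℝ} (h : u < v) : ∀ᶠ δ : ℝ in 𝓝 0, u + δ * s < v + δ * t := by
  have h1 : Tendsto (fun δ : ℝ => u + δ * s) (𝓝 0) (𝓝 (u + 0 * s)) :=
    Continuous.tendsto (by fun_prop) 0
  have h2 : Tendsto (fun δ : ℝ => v + δ * t) (𝓝 0) (𝓝 (v + 0 * t)) :=
    Continuous.tendsto (by fun_prop) 0
  exact h1.eventually_lt h2 (by simpa using h)

open Filter Topology in
lemma ev_le {u v s t : ℝ} (h : u ≤ v) (h' : u = v → s = t) :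
    ∀ᶠ δ : ℝ in 𝓝 0, u + δ * s ≤ v + δ * t := by
  rcases h.eq_or_lt with e | h
  · rw [e, h' e]; exact Eventually.of_forall fun _ => le_rfl
  · exact (ev_lt h).mono fun _ => le_of_lt

open Filter Topology in
/-- The perturbation argument. -/
lemma perturb {I J R : Type} [Fintype I] [Fintype J] [DecidableEq J] {m : ℕ} {p : J → ℝ}
    {r : J → R} (hp : ∀ j, 0 < p j)
    {job : I → J} {μ : I → Fin m} {a b : I → ℝ} (h : PieceOk m p r job μ a b)
    (hn : ∀ x y, a x < b x → a y < b y → r (job x) = r (job y) → b x = a y → μ x = μ y)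
    {C : J → ℝ} (hC : ∀ i, b i ≤ C (job i))
    {x y : I} (hxy : x ≠ y) (hj : job x = job y) (hx : a x < b x) (hy : a y < b y) :
    ∃ k L : ℝ, ∀ᶠ δ : ℝ in 𝓝 0, ∃ (a' b' : I → ℝ) (C' : J → ℝ),
      PieceOk m p r job μ a' b' ∧ (∀ i, b' i ≤ C' (job i)) ∧ (∀ j, 0 ≤ C' j) ∧
      ∑ j, C' j ≤ ∑ j, C j + δ * k ∧
      ∑ i, (b' i - a' i) ^ 2 = ∑ i, (b i - a i) ^ 2 + δ * L + 2 * δ ^ 2 := by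
  classical
  obtain ⟨h0, hab, hd, hs⟩ := h
  have ord : ∀ i k, i ≠ k → (μ i = μ k ∨ r (job i) = r (job k)) → a i < b i → a k < b k →
      b i ≤ a k ∨ b k ≤ a i := fun i k h1 h2 h3 h4 => order_of_disj (hd i k h1 h2) h3 h4
  -- last active piece
  have hlast : ∀ j, ∃ l, job l = j ∧ a l < b l ∧
      ∀ i, job i = j → a i < b i → i ≠ l → b i < b l := by
    intro j
    have hne : ∃ i, job i = j ∧ a i < b i := by
      by_contra hcon
      push Not at hcon
      have : ∑ i with job i = j, (b i - a i) ≤ 0 := Finset.sum_nonpos fun i hi => by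
        have := hcon i (Finset.mem_filter.1 hi).2
        linarith
      rw [hs j] at this
      linarith [hp j]
    obtain ⟨l, ⟨hl1, hl2⟩, hl3⟩ := Set.exists_max_image {i | job i = j ∧ a i < b i} b
      (Set.toFinite _) hne
    refine ⟨l, hl1, hl2, fun i h1 h2 h3 => ?_⟩
    have h4 := hl3 i ⟨h1, h2⟩
    rcases ord i l h3 (Or.inr (by rw [h1, hl1])) h2 hl2 with h | h <;> linarith
  choose l hl1 hl2 hl3 using hlast
  -- shift
  let f : Fin m → ℝ → ℝ := fun M e =>
    (if M = μ x ∧ b x ≤ e then 1 else 0) - (if M = μ y ∧ b y ≤ e then 1 else 0)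
  have hone : ∀ z i, a z < b z → a i < b i →
      (if μ i = μ z ∧ b z ≤ b i then (1 : ℝ) else 0) - (if μ i = μ z ∧ b z ≤ a i then 1 else 0)
        = if i = z then 1 else 0 := by
    intro z i hz hi
    by_cases hiz : i = z
    · subst hiz; simp [hi]
    by_cases hm : μ i = μ z
    · rcases ord i z hiz (Or.inl hm) hi hz with h | h
      · have h1 : ¬ b z ≤ b i := by linarith
        have h2 : ¬ b z ≤ a i := by linarith
        simp [hiz, h1, h2]
      · have h1 : b z ≤ b i := by linarith
        simp [hiz, hm, h, h1]
    · simp [hiz, hm]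
  have hflen : ∀ i, a i < b i → f (μ i) (b i) - f (μ i) (a i)
      = (if i = x then 1 else 0) - (if i = y then 1 else 0) := by
    intro i hi
    have h1 := hone x i hx hi
    have h2 := hone y i hy hi
    simp only [f]
    linarith
  have hbx : 0 < b x := (h0 x).trans_lt hx
  have hby : 0 < b y := (h0 y).trans_lt hy
  have hf0 : ∀ M, f M 0 = 0 := by
    intro M
    simp [f, hbx.not_ge, hby.not_ge]
  let A : ℝ → I → ℝ := fun δ i => if a i < b i then a i + δ * f (μ i) (a i) else 0
  let B : ℝ → I → ℝ := fun δ i => if a i < b i then b i + δ * f (μ i) (b i) else 0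
  let e : I → ℝ := fun i => (if i = x then 1 else 0) - (if i = y then 1 else 0)
  have hlen : ∀ δ i, B δ i - A δ i = (b i - a i) + δ * e i := by
    intro δ i
    by_cases hi : a i < b i
    · have := hflen i hi
      simp only [A, B, e, if_pos hi, ← this]
      ring
    · have h1 : i ≠ x := by rintro rfl; exact hi hx
      have h2 : i ≠ y := by rintro rfl; exact hi hy
      have h3 : a i = b i := le_antisymm (hab i) (not_lt.1 hi)
      simp [A, B, e, h1, h2, h3]
  refine ⟨∑ j, f (μ (l j)) (b (l j)), ∑ i, 2 * (b i - a i) * e i, ?_⟩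
  have E1 : ∀ᶠ δ : ℝ in 𝓝 0, ∀ i, 0 ≤ a i + δ * f (μ i) (a i) := by
    rw [eventually_all]
    intro i
    have := ev_le (s := 0) (t := f (μ i) (a i)) (h0 i) (fun h => by rw [← h, hf0])
    simpa using this
  have E2 : ∀ᶠ δ : ℝ in 𝓝 0, ∀ i, a i < b i →
      a i + δ * f (μ i) (a i) < b i + δ * f (μ i) (b i) := by
    rw [eventually_all]
    intro i
    by_cases hi : a i < b i
    · simpa [hi] using ev_lt hi
    · simp [hi]
  have E3 : ∀ᶠ δ : ℝ in 𝓝 0, ∀ i k, a i < b i → a k < b k →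
      (μ i = μ k ∨ r (job i) = r (job k)) → b i ≤ a k →
      b i + δ * f (μ i) (b i) ≤ a k + δ * f (μ k) (a k) := by
    rw [eventually_all]
    intro i
    rw [eventually_all]
    intro k
    by_cases hc : a i < b i ∧ a k < b k ∧ (μ i = μ k ∨ r (job i) = r (job k)) ∧ b i ≤ a k
    · obtain ⟨h1, h2, h3, h4⟩ := hc
      refine (ev_le (s := f (μ i) (b i)) (t := f (μ k) (a k)) h4 ?_).mono
        fun δ hδ _ _ _ _ => hδ
      intro heq
      have : μ i = μ k := h3.elim id fun h3 => hn i k h1 h2 h3 heq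
      rw [this, heq]
    · exact Eventually.of_forall fun δ h1 h2 h3 h4 => absurd ⟨h1, h2, h3, h4⟩ hc
  have E4 : ∀ᶠ δ : ℝ in 𝓝 0, ∀ i, a i < b i →
      b i + δ * f (μ i) (b i) ≤ b (l (job i)) + δ * f (μ (l (job i))) (b (l (job i))) := by
    rw [eventually_all]
    intro i
    by_cases hi : a i < b i
    · by_cases hil : i = l (job i)
      · rw [← hil]; exact Eventually.of_forall fun _ _ => le_rfl
      · exact (ev_lt (hl3 (job i) i rfl hi hil)).mono fun δ hδ _ => hδ.le
    · simp [hi]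
  filter_upwards [E1, E2, E3, E4] with δ e1 e2 e3 e4
  have hCl : ∀ j, 0 ≤ b (l j) + δ * f (μ (l j)) (b (l j)) := fun j =>
    (e1 (l j)).trans (e2 (l j) (hl2 j)).le
  refine ⟨A δ, B δ, fun j => b (l j) + δ * f (μ (l j)) (b (l j)), ⟨?_, ?_, ?_, ?_⟩, ?_, hCl, ?_, ?_⟩
  · intro i
    simp only [A]
    split_ifs
    · exact e1 i
    · exact le_rfl
  · intro i
    simp only [A, B]
    split_ifs with hi
    · exact (e2 i hi).le
    · exact le_rfl
  · intro i k hik hc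
    by_cases hi : a i < b i
    swap
    · have : B δ i = A δ i := by simp [A, B, hi]
      rw [this]; exact (min_le_left _ _).trans (le_max_left _ _)
    by_cases hk : a k < b k
    swap
    · have : B δ k = A δ k := by simp [A, B, hk]
      rw [this]; exact (min_le_right _ _).trans (le_max_right _ _)
    simp only [A, B, if_pos hi, if_pos hk]
    rcases ord i k hik hc hi hk with h | h
    · exact (min_le_left _ _).trans ((e3 i k hi hk hc h).trans (le_max_right _ _))
    · exact (min_le_right _ _).trans
        ((e3 k i hk hi (hc.imp Eq.symm Eq.symm) h).trans (le_max_left _ _))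
  · intro j
    rw [← hs j]
    simp only [hlen, Finset.sum_add_distrib, ← Finset.mul_sum, e, Finset.sum_sub_distrib]
    have : ∀ z, (∑ i with job i = j, if i = z then (1 : ℝ) else 0) = if job z = j then 1 else 0 := by
      intro z
      rw [Finset.sum_ite_eq']
      simp
    rw [this, this, hj]
    simp
  · intro i
    simp only [B]
    split_ifs with hi
    · exact e4 i hi
    · exact hCl _
  · rw [Finset.sum_add_distrib, ← Finset.mul_sum]
    have : ∑ j, b (l j) ≤ ∑ j, C j := Finset.sum_le_sum fun j _ => by
      have := hC (l j)
      rwa [hl1] at this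
    linarith
  · simp only [hlen]
    have he2 : ∑ i, e i ^ 2 = 2 := by
      have : ∀ i, e i ^ 2 = (if i = x then (1 : ℝ) else 0) + (if i = y then 1 else 0) := by
        intro i
        simp only [e]
        by_cases h1 : i = x
        · subst h1; simp [hxy]
        · by_cases h2 : i = y <;> simp [h1, h2, hxy.symm]
      simp only [this, Finset.sum_add_distrib, Finset.sum_ite_eq', Finset.mem_univ, if_true]
      norm_num
    calc ∑ i, (b i - a i + δ * e i) ^ 2
        = ∑ i, ((b i - a i) ^ 2 + δ * (2 * (b i - a i) * e i) + δ ^ 2 * e i ^ 2) :=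
          Finset.sum_congr rfl fun i _ => by ring
      _ = _ := by
          rw [Finset.sum_add_distrib, Finset.sum_add_distrib, ← Finset.mul_sum, ← Finset.mul_sum,
            he2]
          ring

open Filter Topology in
/-- Existence of a piece schedule in which no job has two active pieces. -/
lemma exists_good {I J R : Type} [Fintype I] [Fintype J] [DecidableEq J] {m : ℕ} {p : J → ℝ}
    {r : J → R} (hp : ∀ j, 0 < p j)
    {job : I → J} {μ : I → Fin m} {a b : I → ℝ} (h : PieceOk m p r job μ a b)
    {C : J → ℝ} (hC : ∀ i, b i ≤ C (job i)) (hC0 : ∀ j, 0 ≤ C j) :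
    ∃ (μ : I → Fin m) (a b : I → ℝ) (C' : J → ℝ), PieceOk m p r job μ a b ∧
      (∀ i, b i ≤ C' (job i)) ∧ ∑ j, C' j ≤ ∑ j, C j ∧
      ∀ x y, job x = job y → a x < b x → a y < b y → x = y := by
  classical
  let T := ∑ j, C j
  let K : Set ((I → ℝ) × (I → ℝ) × (J → ℝ)) := {z | (∃ μ, PieceOk m p r job μ z.1 z.2.1) ∧
    (∀ i, z.2.1 i ≤ z.2.2 (job i)) ∧ (∀ j, 0 ≤ z.2.2 j) ∧ ∑ j, z.2.2 j ≤ T}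
  have hclosed : IsClosed K := by
    have h1 : IsClosed {z : (I → ℝ) × (I → ℝ) × (J → ℝ) |
        ∃ μ, PieceOk m p r job μ z.1 z.2.1} := by
      rw [Set.ofPred_exists]
      refine isClosed_iUnion_of_finite fun μ => ?_
      simp only [PieceOk, Set.ofPred_and, Set.ofPred_forall]
      refine IsClosed.inter ?_ (IsClosed.inter ?_ (IsClosed.inter ?_ ?_))
      · exact isClosed_iInter fun i => isClosed_le (by fun_prop) (by fun_prop)
      · exact isClosed_iInter fun i => isClosed_le (by fun_prop) (by fun_prop)
      · exact isClosed_iInter fun i => isClosed_iInter fun k => isClosed_iInter fun _ =>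
          isClosed_iInter fun _ => isClosed_le (by fun_prop) (by fun_prop)
      · exact isClosed_iInter fun j => isClosed_eq (by fun_prop) (by fun_prop)
    have h2 : IsClosed {z : (I → ℝ) × (I → ℝ) × (J → ℝ) |
        ∀ i, z.2.1 i ≤ z.2.2 (job i)} := by
      simp only [Set.ofPred_forall]
      exact isClosed_iInter fun i => isClosed_le (by fun_prop) (by fun_prop)
    have h3 : IsClosed {z : (I → ℝ) × (I → ℝ) × (J → ℝ) | ∀ j, 0 ≤ z.2.2 j} := by
      simp only [Set.ofPred_forall]
      exact isClosed_iInter fun i => isClosed_le (by fun_prop) (by fun_prop)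
    have h4 : IsClosed {z : (I → ℝ) × (I → ℝ) × (J → ℝ) | ∑ j, z.2.2 j ≤ T} :=
      isClosed_le (by fun_prop) (by fun_prop)
    exact h1.inter (h2.inter (h3.inter h4))
  have hcomp : IsCompact K := by
    refine IsCompact.of_isClosed_subset
      (isCompact_Icc (a := ((fun _ => 0, fun _ => 0, fun _ => 0) : (I → ℝ) × (I → ℝ) × (J → ℝ)))
        (b := (fun _ => T, fun _ => T, fun _ => T))) hclosed ?_
    rintro ⟨a, b, C⟩ ⟨⟨μ, h0, hab, -, -⟩, h1, h2, h3⟩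
    dsimp only at h0 hab h1 h2 h3
    have hCT : ∀ j, C j ≤ T := fun j =>
      (Finset.single_le_sum (fun j _ => h2 j) (Finset.mem_univ j)).trans h3
    refine ⟨⟨fun i => h0 i, fun i => (h0 i).trans (hab i), fun j => h2 j⟩,
      ⟨fun i => (hab i).trans ((h1 i).trans (hCT _)), fun i => (h1 i).trans (hCT _),
        fun j => hCT j⟩⟩
  obtain ⟨z1, hz1, hmin⟩ := hcomp.exists_isMinOn (f := fun z => ∑ j, z.2.2 j)
    ⟨(a, b, C), ⟨μ, h⟩, hC, hC0, le_rfl⟩ (by fun_prop)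
  have hK2 : IsCompact (K ∩ {z | ∑ j, z.2.2 j ≤ ∑ j, z1.2.2 j}) :=
    hcomp.inter_right (isClosed_le (by fun_prop) (by fun_prop))
  obtain ⟨⟨a1, b1, C1⟩, ⟨⟨⟨μ0, hok0⟩, hbC, hC10, hT⟩, hz2⟩, hmax⟩ :=
    hK2.exists_isMaxOn (f := fun z => ∑ i, (z.2.1 i - z.1 i) ^ 2)
    ⟨z1, hz1, le_refl (∑ j, z1.2.2 j)⟩ (by fun_prop)
  dsimp only at hok0 hbC hC10 hT
  have hz2 : ∑ j, C1 j ≤ ∑ j, z1.2.2 j := hz2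
  obtain ⟨ν, hok, hn⟩ := exists_normal hok0
  refine ⟨ν, a1, b1, C1, hok, hbC, hT, ?_⟩
  intro x y hj hx hy
  by_contra hxy
  obtain ⟨k, L, hev⟩ := perturb hp hok hn hbC hxy hj hx hy
  have hev' : ∀ᶠ δ : ℝ in 𝓝 0, _ := (continuous_neg.tendsto' (0 : ℝ) 0 neg_zero).eventually hev
  obtain ⟨δ, ⟨⟨a2, b2, C2, ok2, hb2, hc2, hs2, hq2⟩, ⟨a3, b3, C3, ok3, hb3, hc3, hs3, hq3⟩⟩, hδ⟩ :=
    (((hev.and hev').filter_mono nhdsWithin_le_nhds).and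
      (self_mem_nhdsWithin : Set.Ioi (0 : ℝ) ∈ 𝓝[>] 0)).exists
  have hδ : 0 < δ := hδ
  have hmin2 : ∑ j, C2 j ≤ T → ∑ j, z1.2.2 j ≤ ∑ j, C2 j := fun ht =>
    hmin (show (a2, b2, C2) ∈ K from ⟨⟨ν, ok2⟩, hb2, hc2, ht⟩)
  have hmin3 : ∑ j, C3 j ≤ T → ∑ j, z1.2.2 j ≤ ∑ j, C3 j := fun ht =>
    hmin (show (a3, b3, C3) ∈ K from ⟨⟨ν, ok3⟩, hb3, hc3, ht⟩)
  have hk : δ * k = 0 := by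
    rcases le_total (δ * k) 0 with hk | hk
    · have := hmin2 (by linarith)
      linarith
    · have := hmin3 (by linarith)
      linarith
  have q2 : ∑ i, (b2 i - a2 i) ^ 2 ≤ ∑ i, (b1 i - a1 i) ^ 2 :=
    hmax (show (a2, b2, C2) ∈ K ∩ {z | ∑ j, z.2.2 j ≤ ∑ j, z1.2.2 j} from
      ⟨⟨⟨ν, ok2⟩, hb2, hc2, by dsimp only; linarith⟩, by
        simp only [Set.mem_ofPred_eq]; linarith⟩)
  have q3 : ∑ i, (b3 i - a3 i) ^ 2 ≤ ∑ i, (b1 i - a1 i) ^ 2 :=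
    hmax (show (a3, b3, C3) ∈ K ∩ {z | ∑ j, z.2.2 j ≤ ∑ j, z1.2.2 j} from
      ⟨⟨⟨ν, ok3⟩, hb3, hc3, by dsimp only; linarith⟩, by
        simp only [Set.mem_ofPred_eq]; linarith⟩)
  have : 0 < δ ^ 2 := by positivity
  have e : (-δ) ^ 2 = δ ^ 2 := by ring
  rw [e] at hq3
  linarith


/-- A non-preemptive schedule `(s, M)` for the instance with `m` machines,
processing times `p` and resources `r` is feasible if all start times are
nonnegative and the processing intervals of any two distinct jobs assigned to
the same machine, or having the same resource, are disjoint. -/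
def Feasible {J R : Type} (m : ℕ) (p : J → ℝ) (r : J → R)
    (s : J → ℝ) (M : J → Fin m) : Prop :=
  (∀ j, 0 ≤ s j) ∧
  ∀ j j' : J, j ≠ j' → (M j = M j' ∨ r j = r j') →
    Disjoint (Set.Ico (s j) (s j + p j)) (Set.Ico (s j') (s j' + p j'))

/-- A feasible preemptive schedule for the instance with `m` machines, processing
times `p` and resources `r`.  Each job `j` has a nonempty finite set of parts; a
part is a triple consisting of a machine and the two endpoints `a < b` (with
`a ≥ 0`) of its half-open processing interval `[a, b)`.  The intervals of the
parts of a single job are pairwise disjoint and their lengths sum to `p j`; the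
intervals of parts on the same machine are pairwise disjoint; and the intervals
of parts of distinct jobs having the same resource are disjoint. -/
structure PSchedule (J R : Type) (m : ℕ) (p : J → ℝ) (r : J → R) where
  parts : J → Finset (Fin m × ℝ × ℝ)
  parts_nonempty : ∀ j, (parts j).Nonempty
  start_nonneg : ∀ j, ∀ q ∈ parts j, 0 ≤ q.2.1
  start_lt_end : ∀ j, ∀ q ∈ parts j, q.2.1 < q.2.2
  length_sum : ∀ j, ∑ q ∈ parts j, (q.2.2 - q.2.1) = p j
  job_disjoint : ∀ j, ∀ q ∈ parts j, ∀ q' ∈ parts j, q ≠ q' →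
    Disjoint (Set.Ico q.2.1 q.2.2) (Set.Ico q'.2.1 q'.2.2)
  machine_disjoint : ∀ j j' : J, ∀ q ∈ parts j, ∀ q' ∈ parts j',
    ¬(j = j' ∧ q = q') → q.1 = q'.1 →
    Disjoint (Set.Ico q.2.1 q.2.2) (Set.Ico q'.2.1 q'.2.2)
  res_disjoint : ∀ j j' : J, j ≠ j' → r j = r j' →
    ∀ q ∈ parts j, ∀ q' ∈ parts j',
    Disjoint (Set.Ico q.2.1 q.2.2) (Set.Ico q'.2.1 q'.2.2)

/-- The completion time of job `j` in a preemptive schedule: the maximum right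
endpoint of the intervals of its parts. -/
noncomputable def PSchedule.C {J R : Type} {m : ℕ} {p : J → ℝ} {r : J → R}
    (S : PSchedule J R m p r) (j : J) : ℝ :=
  (S.parts j).sup' (S.parts_nonempty j) (fun q => q.2.2)

/-- For every feasible preemptive schedule of an instance of `P|partition|ΣC_j`
there is a feasible non-preemptive schedule whose total completion time is at
most the total completion time of the preemptive schedule; hence preemption does
not help. -/
theorem preemption_does_not_help {J R : Type} [Fintype J]
    (m : ℕ) (hm : 1 ≤ m) (p : J → ℝ) (hp : ∀ j, 0 < p j) (r : J → R)
    (S : PSchedule J R m p r) :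
    ∃ (s : J → ℝ) (M : J → Fin m),
      Feasible m p r s M ∧ ∑ j, (s j + p j) ≤ ∑ j, S.C j := by
  classical
  let I := (j : J) × {q // q ∈ S.parts j}
  have hok : PieceOk m p r (fun i : I => i.1) (fun i => i.2.1.1) (fun i => i.2.1.2.1)
      (fun i => i.2.1.2.2) := by
    refine ⟨fun i => S.start_nonneg _ _ i.2.2, fun i => (S.start_lt_end _ _ i.2.2).le, ?_, ?_⟩
    · rintro ⟨j, q, hq⟩ ⟨j', q', hq'⟩ hne hc
      rw [← Set.Ico_disjoint_Ico]
      by_cases hjj : j = j'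
      · subst hjj
        refine S.job_disjoint j q hq q' hq' ?_
        rintro rfl
        exact hne rfl
      · rcases hc with hc | hc
        · exact S.machine_disjoint j j' q hq q' hq' (fun h => hjj h.1) hc
        · exact S.res_disjoint j j' hjj hc q hq q' hq'
    · intro j
      rw [← S.length_sum j, Finset.sum_filter, Fintype.sum_sigma, Finset.sum_eq_single j]
      · simp only [if_true]
        exact Finset.sum_coe_sort (S.parts j) (fun q => q.2.2 - q.2.1)
      · intro j' _ hj'
        simp [hj']
      · simp
  have hC : ∀ i : I, i.2.1.2.2 ≤ S.C i.1 := fun i =>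
    Finset.le_sup' (fun q : Fin m × ℝ × ℝ => q.2.2) i.2.2
  have hC0 : ∀ j, 0 ≤ S.C j := by
    intro j
    obtain ⟨q, hq⟩ := S.parts_nonempty j
    exact (S.start_nonneg j q hq).trans ((S.start_lt_end j q hq).le.trans (hC ⟨j, q, hq⟩))
  obtain ⟨μ, a, b, C, ⟨h0, hab, hd, hs⟩, hbC, hsum, huniq⟩ := exists_good hp hok hC hC0
  have hex : ∀ j, ∃ i : I, i.1 = j ∧ b i = a i + p j := by
    intro j
    have hne : ∃ i : I, i.1 = j ∧ a i < b i := by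
      by_contra hcon
      push Not at hcon
      have : ∑ i : I with i.1 = j, (b i - a i) ≤ 0 := Finset.sum_nonpos fun i hi => by
        have := hcon i (Finset.mem_filter.1 hi).2
        linarith
      rw [hs j] at this
      linarith [hp j]
    obtain ⟨i, hi, hlt⟩ := hne
    refine ⟨i, hi, ?_⟩
    have h1 := hs j
    rw [Finset.sum_eq_single i] at h1
    · linarith
    · intro k hk hki
      by_contra hcon
      apply hki
      refine huniq k i ((Finset.mem_filter.1 hk).2.trans hi.symm) ?_ hlt
      exact lt_of_le_of_ne (hab k) fun h => hcon (by rw [h]; ring)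
    · intro h
      exact absurd (by simpa using hi) h
  choose g hg1 hg2 using hex
  refine ⟨fun j => a (g j), fun j => μ (g j), ⟨fun j => h0 _, ?_⟩, ?_⟩
  · intro j j' hne hc
    rw [Set.Ico_disjoint_Ico]
    simp only [← hg2]
    refine hd _ _ ?_ ?_
    · intro h
      apply hne
      rw [← hg1 j, ← hg1 j', h]
    · dsimp only
      rw [hg1, hg1]; exact hc
  · refine le_trans (Finset.sum_le_sum fun j _ => ?_) hsum
    rw [← hg2]
    have := hbC (g j)
    rwa [hg1] at this
end

section
/- Let S be a feasible (non-preemptive) schedule for an instance of P|partition|ΣC_j such that no feasible schedule has strictly smaller total completion time. Then all jobs sharing the same resource are processed in SPT order: for all jobs j and j' with r_j = r_{j'} and p_j < p_{j'}, it holds that C_j < C_{j'}. -/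
structure GF {J R : Type} {m : ℕ} (I : Set J) (p : J → ℝ) (r : J → R)
    (s : J → ℝ) (M : J → Fin m) : Prop where
  nonneg : ∀ j, 0 ≤ s j
  zeroStart : ∀ j ∈ I, s j = 0
  disj : ∀ j k, j ≠ k → (M j = M k ∨ r j = r k) → s j + p j ≤ s k ∨ s k + p k ≤ s j

def Touch {J R : Type} {m : ℕ} (p : J → ℝ) (r : J → R)
    (s : J → ℝ) (M : J → Fin m) : Prop :=
  ∀ i j, r i = r j → s i + p i = s j → M i = M j

def OptS {J R : Type} [Fintype J] {m : ℕ} (I : Set J) (p : J → ℝ) (r : J → R)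
    (s : J → ℝ) (M : J → Fin m) : Prop :=
  GF I p r s M ∧ ∀ (s' : J → ℝ) (M' : J → Fin m), GF I p r s' M' →
      ∑ j, (s j + p j) ≤ ∑ j, (s' j + p j)

open Classical in
noncomputable def cnt {J : Type} [Fintype J] {m : ℕ} (s : J → ℝ) (M : J → Fin m) (j : J) : ℕ :=
  (Finset.univ.filter (fun k => M k = M j ∧ s j ≤ s k)).card

lemma feasible_iff {J R : Type} {m : ℕ} {p : J → ℝ} (hp : ∀ j, 0 < p j) {r : J → R}
    {s : J → ℝ} {M : J → Fin m} : Feasible m p r s M ↔ GF ∅ p r s M := by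
  have key : ∀ j k, Disjoint (Set.Ico (s j) (s j + p j)) (Set.Ico (s k) (s k + p k)) ↔
      (s j + p j ≤ s k ∨ s k + p k ≤ s j) := by
    intro j k
    have := hp j
    have := hp k
    rw [Set.Ico_disjoint_Ico, min_le_iff, le_max_iff, le_max_iff]
    constructor
    · rintro ((h | h) | (h | h))
      · linarith
      · exact Or.inl h
      · exact Or.inr h
      · linarith
    · rintro (h | h)
      · exact Or.inl (Or.inr h)
      · exact Or.inr (Or.inl h)
  constructor
  · rintro ⟨h1, h2⟩
    exact ⟨h1, by simp, fun j k hjk h => (key j k).1 (h2 j k hjk h)⟩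
  · rintro ⟨h1, _, h2⟩
    exact ⟨h1, fun j k hjk h => (key j k).2 (h2 j k hjk h)⟩

/-- swapping tails makes touching jobs of the same resource share a machine -/
lemma exists_touch {J R : Type} [Fintype J] {m : ℕ} {I : Set J} {p : J → ℝ}
    (hp : ∀ j, 0 < p j) {r : J → R} {s : J → ℝ} {M : J → Fin m} (h : GF I p r s M) :
    ∃ M' : J → Fin m, GF I p r s M' ∧ Touch p r s M' := by
  classical
  let T : (J → Fin m) → Finset (J × J) := fun M =>
    Finset.univ.filter (fun x => r x.1 = r x.2 ∧ s x.1 + p x.1 = s x.2 ∧ M x.1 = M x.2)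
  obtain ⟨N, hN, hmax⟩ := Set.exists_max_image {M : J → Fin m | GF I p r s M}
    (fun M => (T M).card) (Set.toFinite _) ⟨M, h⟩
  refine ⟨N, hN, ?_⟩
  by_contra hT
  unfold Touch at hT
  push Not at hT
  obtain ⟨i, j, hr, hs, hne⟩ := hT
  have hN' : GF I p r s N := hN
  let N' : J → Fin m := fun k => if s j ≤ s k then Equiv.swap (N i) (N j) (N k) else N k
  have hpi := hp i
  have hpj := hp j
  -- jobs on the two machines starting before the cut end before the cut
  have hA : ∀ k, (N k = N i ∨ N k = N j) → s k < s j → s k + p k ≤ s j := by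
    intro k hk hlt
    have hpk := hp k
    rcases hk with hk | hk
    · by_cases hki : k = i
      · rw [hki]; linarith
      · rcases hN'.disj k i hki (Or.inl hk) with h1 | h1 <;> linarith
    · have hkj : k ≠ j := by rintro rfl; linarith
      rcases hN'.disj k j hkj (Or.inl hk) with h1 | h1 <;> linarith
  have hcross : ∀ k l, s k < s j → s j ≤ s l → N k = Equiv.swap (N i) (N j) (N l) →
      s k + p k ≤ s l := by
    intro k l hk hl hkl
    by_cases hkk : N k = N i ∨ N k = N j
    · exact (hA k hkk hk).trans hl
    · push Not at hkk
      have hkl' : N k = N l := by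
        by_cases h1 : N l = N i
        · rw [h1, Equiv.swap_apply_left] at hkl; exact absurd hkl hkk.2
        · by_cases h2 : N l = N j
          · rw [h2, Equiv.swap_apply_right] at hkl; exact absurd hkl hkk.1
          · rwa [Equiv.swap_apply_of_ne_of_ne h1 h2] at hkl
      have hne' : k ≠ l := by rintro rfl; linarith
      have := hp l
      rcases hN'.disj k l hne' (Or.inl hkl') with h1 | h1 <;> linarith
  have hG : GF I p r s N' := by
    refine ⟨hN'.nonneg, hN'.zeroStart, ?_⟩
    intro k l hkl hor
    rcases hor with hor | hor
    swap
    · exact hN'.disj k l hkl (Or.inr hor)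
    simp only [N'] at hor
    by_cases h1 : s j ≤ s k <;> by_cases h2 : s j ≤ s l
    · rw [if_pos h1, if_pos h2] at hor
      exact hN'.disj k l hkl (Or.inl ((Equiv.swap _ _).injective hor))
    · rw [if_pos h1, if_neg h2] at hor
      exact Or.inr (hcross l k (not_le.1 h2) h1 hor.symm)
    · rw [if_neg h1, if_pos h2] at hor
      exact Or.inl (hcross k l (not_le.1 h1) h2 hor)
    · rw [if_neg h1, if_neg h2] at hor
      exact hN'.disj k l hkl (Or.inl hor)
  have hss : T N ⊂ T N' := by
    rw [Finset.ssubset_iff_of_subset]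
    · refine ⟨(i, j), ?_, ?_⟩
      · simp only [T, Finset.mem_filter, Finset.mem_univ, true_and]
        refine ⟨hr, hs, ?_⟩
        have : ¬ s j ≤ s i := by linarith
        simp [N', this]
      · simp only [T, Finset.mem_filter, Finset.mem_univ, true_and]
        tauto
    · rintro ⟨k, l⟩ hkl
      simp only [T, Finset.mem_filter, Finset.mem_univ, true_and] at hkl ⊢
      obtain ⟨h1, h2, h3⟩ := hkl
      refine ⟨h1, h2, ?_⟩
      simp only [N']
      have hpk := hp k
      have hpl := hp l
      by_cases hk : s j ≤ s k
      · rw [if_pos hk, if_pos (by linarith), h3]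
      · by_cases hl : s j ≤ s l
        · rw [if_neg hk, if_pos hl]
          push Not at hk
          by_cases hc : N k = N i ∨ N k = N j
          · exfalso
            have hle := hA k hc hk
            have hlj : s l = s j := by linarith
            rcases hc with hc | hc
            · have hki : k = i := by
                by_contra hki
                rcases hN'.disj k i hki (Or.inl hc) with h4 | h4 <;> linarith
              have : l = j := by
                by_contra hlj'
                rcases hN'.disj l j hlj' (Or.inr (by rw [← h1, hki, hr])) with h4 | h4 <;> linarith
              apply hne
              rw [← hki, ← this, h3]
            · have hlj2 : l = j := by
                by_contra hlj'
                rcases hN'.disj l j hlj' (Or.inl (by rw [← h3, hc])) with h4 | h4 <;> linarith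
              have hki : k = i := by
                by_contra hki
                rcases hN'.disj k i hki (Or.inr (by rw [h1, hlj2, hr])) with h4 | h4 <;> linarith
              apply hne
              rw [← hki, hc]
          · push Not at hc
            rw [← h3, Equiv.swap_apply_of_ne_of_ne hc.1 hc.2]
        · rw [if_neg hk, if_neg hl, h3]
  have h1 := Finset.card_lt_card hss
  have h2 := hmax N' hG
  omega

lemma contig {J R : Type} [Fintype J] {m : ℕ} {I : Set J} {p : J → ℝ}
    (hp : ∀ j, 0 < p j) {r : J → R} {s : J → ℝ} {M : J → Fin m} (h : OptS I p r s M)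
    (ht : Touch p r s M) (j : J) (hj : 0 < s j) : ∃ k, M k = M j ∧ s k + p k = s j := by
  classical
  by_contra hcon
  push Not at hcon
  obtain ⟨hG, hO⟩ := h
  -- threshold below which no relevant predecessor ends
  have hex : ∃ e > 0, e ≤ s j ∧ ∀ k, k ≠ j → (M k = M j ∨ r k = r j) → s k + p k ≤ s j →
      s k + p k ≤ s j - e := by
    have hne : ∀ k, k ≠ j → (M k = M j ∨ r k = r j) → s k + p k ≤ s j → s k + p k < s j := by
      intro k hk hor hle
      refine lt_of_le_of_ne hle ?_
      intro heq
      rcases hor with h1 | h1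
      · exact hcon k h1 heq
      · exact hcon k (ht k j h1 heq) heq
    have : ∃ e > 0, ∀ k, (s k + p k < s j → e ≤ s j - (s k + p k)) := by
      by_cases hemp : (Finset.univ.filter (fun k => s k + p k < s j)).Nonempty
      · obtain ⟨k0, hk0, hmin⟩ := Finset.exists_min_image _ (fun k => s j - (s k + p k)) hemp
        refine ⟨s j - (s k0 + p k0), ?_, ?_⟩
        · simp at hk0; linarith
        · intro k hk
          exact hmin k (by simpa using hk)
      · refine ⟨1, one_pos, fun k hk => ?_⟩
        exact absurd ⟨k, by simpa using hk⟩ hemp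
    obtain ⟨e, he, hh⟩ := this
    refine ⟨min e (s j), lt_min he hj, min_le_right _ _, ?_⟩
    intro k hk hor hle
    have := hh k (hne k hk hor hle)
    have := min_le_left e (s j)
    linarith
  obtain ⟨e, he, hej, hh⟩ := hex
  have hG' : GF I p r (Function.update s j (s j - e)) M := by
    refine ⟨?_, ?_, ?_⟩
    · intro k
      by_cases hk : k = j
      · subst hk; simp; linarith
      · simp [hk, hG.nonneg k]
    · intro k hk
      have : k ≠ j := by
        rintro rfl
        have := hG.zeroStart k hk
        linarith
      simp [this, hG.zeroStart k hk]
    · intro k l hkl hor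
      have hd := hG.disj k l hkl hor
      by_cases hk : k = j
      · subst hk
        have hl : l ≠ k := fun h => hkl h.symm
        simp only [Function.update_self, Function.update_of_ne hl]
        rcases hd with hd | hd
        · left; linarith
        · right
          exact hh l hl (by tauto) hd
      · by_cases hl : l = j
        · subst hl
          simp only [Function.update_self, Function.update_of_ne hk]
          rcases hd with hd | hd
          · left
            exact hh k hk hor hd
          · right; linarith
        · simpa [hk, hl] using hd
  have hle := hO _ _ hG'
  have hlt : ∑ k, (Function.update s j (s j - e) k + p k) < ∑ k, (s k + p k) := by
    apply Finset.sum_lt_sum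
    · intro k _
      by_cases hk : k = j
      · subst hk; simp; linarith
      · simp [hk]
    · exact ⟨j, Finset.mem_univ _, by simp; linarith⟩
  linarith

open Classical in
lemma start_eq {J R : Type} [Fintype J] {m : ℕ} {I : Set J} {p : J → ℝ}
    (hp : ∀ j, 0 < p j) {r : J → R} {s : J → ℝ} {M : J → Fin m} (h : OptS I p r s M)
    (ht : Touch p r s M) (j : J) :
    s j = ∑ k ∈ Finset.univ.filter (fun k => M k = M j ∧ s k < s j), p k := by
  have hwf : ∀ n : ℕ, ∀ j, (Finset.univ.filter (fun k => M k = M j ∧ s k < s j)).card = n →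
      s j = ∑ k ∈ Finset.univ.filter (fun k => M k = M j ∧ s k < s j), p k := by
    intro n
    induction n using Nat.strong_induction_on with
    | _ n ih =>
      intro j hn
      by_cases hj : 0 < s j
      · obtain ⟨k, hk, hks⟩ := contig hp h ht j hj
        have hpk := hp k
        have hset : Finset.univ.filter (fun l => M l = M j ∧ s l < s j) =
            insert k (Finset.univ.filter (fun l => M l = M k ∧ s l < s k)) := by
          ext l
          simp only [Finset.mem_filter, Finset.mem_univ, true_and, Finset.mem_insert]
          have hpl := hp l
          constructor
          · rintro ⟨h1, h2⟩
            by_cases hlk : l = k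
            · exact Or.inl hlk
            · right
              refine ⟨h1.trans hk.symm, ?_⟩
              rcases h.1.disj l k hlk (Or.inl (h1.trans hk.symm)) with h3 | h3 <;> linarith
          · rintro (rfl | ⟨h1, h2⟩)
            · exact ⟨hk, by linarith⟩
            · exact ⟨h1.trans hk, by linarith⟩
        have hnot : k ∉ Finset.univ.filter (fun l => M l = M k ∧ s l < s k) := by simp
        rw [hset, Finset.card_insert_of_notMem hnot] at hn
        rw [hset, Finset.sum_insert hnot, ← ih _ (by omega) k rfl]
        linarith
      · have h0 : s j = 0 := le_antisymm (not_lt.1 hj) (h.1.nonneg j)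
        rw [Finset.filter_false_of_mem]
        · simp [h0]
        · rintro k _ ⟨_, hk⟩
          have := h.1.nonneg k
          linarith
  exact hwf _ j rfl

open Classical in
lemma cost_eq {J : Type} [Fintype J] {m : ℕ} {s : J → ℝ} {M : J → Fin m}
    (hinj : ∀ j k, M j = M k → s j = s k → j = k) (p : J → ℝ) :
    ∑ j, ((∑ k ∈ Finset.univ.filter (fun k => M k = M j ∧ s k < s j), p k) + p j)
      = ∑ k, (cnt s M k : ℝ) * p k := by
  have h1 : ∀ j, (∑ k ∈ Finset.univ.filter (fun k => M k = M j ∧ s k < s j), p k) + p j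
      = ∑ k, if M k = M j ∧ s k ≤ s j then p k else 0 := by
    intro j
    rw [← Finset.sum_filter]
    have : Finset.univ.filter (fun k => M k = M j ∧ s k ≤ s j) =
        insert j (Finset.univ.filter (fun k => M k = M j ∧ s k < s j)) := by
      ext k
      simp only [Finset.mem_filter, Finset.mem_univ, true_and, Finset.mem_insert]
      constructor
      · rintro ⟨h1, h2⟩
        rcases h2.lt_or_eq with h3 | h3
        · exact Or.inr ⟨h1, h3⟩
        · exact Or.inl (hinj _ _ h1 h3)
      · rintro (rfl | ⟨h1, h2⟩)
        · exact ⟨rfl, le_rfl⟩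
        · exact ⟨h1, h2.le⟩
    rw [this, Finset.sum_insert (by simp), add_comm]
  rw [Finset.sum_congr rfl (fun j _ => h1 j), Finset.sum_comm]
  refine Finset.sum_congr rfl (fun k _ => ?_)
  rw [← Finset.sum_filter, Finset.sum_const, nsmul_eq_mul]
  congr 2
  unfold cnt
  congr 1
  ext l
  simp [eq_comm]

lemma local_family {J R : Type} [Fintype J] {m : ℕ} {I : Set J} {p : J → ℝ}
    (hp : ∀ j, 0 < p j) {r : J → R} {s : J → ℝ} {M : J → Fin m} (h : OptS I p r s M)
    (ht : Touch p r s M) (d : J → ℝ) :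
    ∃ e > 0, ∀ t : ℝ, |t| < e → ∃ s' : J → ℝ, GF I (fun j => p j + t * d j) r s' M ∧
      ∑ j, (s' j + (p j + t * d j)) = ∑ j, (s j + p j) + t * ∑ j, (cnt s M j : ℝ) * d j := by
  classical
  have hinj : ∀ j k, M j = M k → s j = s k → j = k := by
    intro j k h1 h2
    by_contra hne
    have := hp j
    have := hp k
    rcases h.1.disj j k hne (Or.inl h1) with h3 | h3 <;> linarith
  have hst := start_eq hp h ht
  let P : ℝ → J → ℝ := fun t j => p j + t * d j
  let σ : ℝ → J → ℝ := fun t j =>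
    ∑ k ∈ Finset.univ.filter (fun k => M k = M j ∧ s k < s j), P t k
  have hP0 : ∀ j, P 0 j = p j := by intro j; simp [P]
  have hσ0 : ∀ j, σ 0 j = s j := by
    intro j
    rw [hst j]
    simp [σ, P]
  have hPc : ∀ j, Continuous (fun t => P t j) := by intro j; simp only [P]; fun_prop
  have hσc : ∀ j, Continuous (fun t => σ t j) := by
    intro j
    exact continuous_finsetSum _ (fun k _ => hPc k)
  have hev : ∀ᶠ t in nhds (0 : ℝ), (∀ j, 0 < P t j) ∧
      ∀ j k, s j + p j < s k → σ t j + P t j < σ t k := by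
    refine Filter.Eventually.and ?_ ?_
    · rw [Filter.eventually_all]
      intro j
      apply (hPc j).continuousAt.eventually_const_lt
      show 0 < P 0 j
      rw [hP0]; exact hp j
    · rw [Filter.eventually_all]
      intro j
      rw [Filter.eventually_all]
      intro k
      by_cases hjk : s j + p j < s k
      · have : ∀ᶠ t in nhds (0 : ℝ), σ t j + P t j < σ t k := by
          apply ContinuousAt.eventually_lt
          · exact ((hσc j).add (hPc j)).continuousAt
          · exact (hσc k).continuousAt
          · rw [hσ0, hσ0, hP0]; exact hjk
        filter_upwards [this] with t h1 _ using h1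
      · exact Filter.Eventually.of_forall (fun t h1 => absurd h1 hjk)
  obtain ⟨e, he, hball⟩ := Metric.eventually_nhds_iff.1 hev
  refine ⟨e, he, fun t hte => ⟨σ t, ?_, ?_⟩⟩
  · obtain ⟨hpos, hlt⟩ := hball (y := t) (by simpa [Real.dist_eq] using hte)
    have hmach : ∀ j k, M j = M k → s j < s k → σ t j + P t j ≤ σ t k := by
      intro j k hM hlt'
      have hnot : j ∉ Finset.univ.filter (fun k => M k = M j ∧ s k < s j) := by simp
      have : σ t j + P t j = ∑ l ∈ insert j (Finset.univ.filter (fun k => M k = M j ∧ s k < s j)),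
          P t l := by
        rw [Finset.sum_insert hnot, add_comm]
      rw [this]
      apply Finset.sum_le_sum_of_subset_of_nonneg
      · intro l hl
        simp only [Finset.mem_filter, Finset.mem_univ, true_and, Finset.mem_insert] at hl ⊢
        rcases hl with rfl | ⟨h1, h2⟩
        · exact ⟨hM, hlt'⟩
        · exact ⟨h1.trans hM, h2.trans hlt'⟩
      · intro l _ _
        exact (hpos l).le
    have hone : ∀ j k, (M j = M k ∨ r j = r k) → s j + p j ≤ s k → σ t j + P t j ≤ σ t k := by
      intro j k hor hle
      have hpj := hp j
      by_cases hM : M j = M k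
      · exact hmach j k hM (by linarith)
      · have hr : r j = r k := by tauto
        rcases hle.lt_or_eq with h1 | h1
        · exact (hlt j k h1).le
        · exact absurd (ht j k hr h1) hM
    refine ⟨?_, ?_, ?_⟩
    · intro j
      exact Finset.sum_nonneg (fun k _ => (hpos k).le)
    · intro j hj
      have h0 := h.1.zeroStart j hj
      simp only [σ]
      rw [Finset.filter_false_of_mem]
      · simp
      · rintro k _ ⟨_, hk⟩
        have := h.1.nonneg k
        linarith
    · intro j k hjk hor
      rcases h.1.disj j k hjk hor with h1 | h1
      · exact Or.inl (hone j k hor h1)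
      · exact Or.inr (hone k j (by tauto) h1)
  · have h1 := cost_eq hinj (P t)
    have h2 := cost_eq hinj p
    have h3 : ∑ j, (s j + p j) = ∑ k, (cnt s M k : ℝ) * p k := by
      rw [← h2]
      exact Finset.sum_congr rfl (fun j _ => by rw [← hst j])
    calc ∑ j, (σ t j + (p j + t * d j)) = ∑ k, (cnt s M k : ℝ) * P t k := h1
      _ = _ := by
        rw [h3, Finset.mul_sum, ← Finset.sum_add_distrib]
        refine Finset.sum_congr rfl (fun k _ => ?_)
        simp only [P]; ring

/-- concavity of the optimal value in the processing times, in the form needed -/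
lemma global_support {J R : Type} [Fintype J] {m : ℕ} {I : Set J} {p q : J → ℝ}
    (hp : ∀ j, 0 < p j) (hq : ∀ j, 0 < q j) {r : J → R} {s : J → ℝ} {M : J → Fin m}
    (h : OptS I p r s M) (ht : Touch p r s M)
    (hneg : ∑ j, (cnt s M j : ℝ) * (q j - p j) < 0) :
    ∃ (s' : J → ℝ) (M' : J → Fin m), GF I q r s' M' ∧
      ∑ j, (s' j + q j) < ∑ j, (s j + p j) := by
  classical
  by_contra hcon
  push Not at hcon
  set c0 := ∑ j, (s j + p j) with hc0
  let P : ℝ → J → ℝ := fun t j => p j + t * (q j - p j)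
  have hPpos : ∀ t, 0 ≤ t → t ≤ 1 → ∀ j, 0 < P t j := by
    intro t h0 h1 j
    simp only [P]
    have := hp j
    have := hq j
    rcases h0.lt_or_eq with h2 | h2
    · nlinarith
    · rw [← h2]; simpa using hp j
  let cost : ℝ × (J → ℝ) → ℝ := fun x => ∑ j, (x.2 j + P x.1 j)
  have hcostc : Continuous cost := by simp only [cost, P]; fun_prop
  let A : Set (ℝ × (J → ℝ)) := {x | x ∈ Set.Icc (0:ℝ) 1 ×ˢ Set.Icc (0 : J → ℝ) (fun _ => c0) ∧
    ∃ M' : J → Fin m, GF I (P x.1) r x.2 M'}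
  have hcl : IsClosed {x : ℝ × (J → ℝ) | ∃ M' : J → Fin m, GF I (P x.1) r x.2 M'} := by
    have : {x : ℝ × (J → ℝ) | ∃ M' : J → Fin m, GF I (P x.1) r x.2 M'} =
        ⋃ M' : J → Fin m, {x : ℝ × (J → ℝ) | GF I (P x.1) r x.2 M'} := by
      ext x; simp
    rw [this]
    apply isClosed_iUnion_of_finite
    intro M'
    have h2 : {x : ℝ × (J → ℝ) | GF I (P x.1) r x.2 M'} =
        {x | ∀ j, 0 ≤ x.2 j} ∩ {x | ∀ j, j ∈ I → x.2 j = 0} ∩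
        {x | ∀ j k, j ≠ k → (M' j = M' k ∨ r j = r k) →
          x.2 j + P x.1 j ≤ x.2 k ∨ x.2 k + P x.1 k ≤ x.2 j} := by
      ext x
      constructor
      · rintro ⟨a, b, c⟩
        exact ⟨⟨a, b⟩, c⟩
      · rintro ⟨⟨a, b⟩, c⟩
        exact ⟨a, b, c⟩
    rw [h2]
    refine IsClosed.inter (IsClosed.inter ?_ ?_) ?_
    · simp only [Set.ofPred_forall]
      refine isClosed_iInter (fun j => isClosed_le (by fun_prop) (by fun_prop))
    · simp only [Set.ofPred_forall]
      refine isClosed_iInter (fun j => isClosed_iInter (fun _ =>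
        isClosed_eq (by fun_prop) (by fun_prop)))
    · simp only [Set.ofPred_forall]
      refine isClosed_iInter (fun j => isClosed_iInter (fun k => isClosed_iInter (fun _ =>
        isClosed_iInter (fun _ => ?_))))
      rw [Set.ofPred_or]
      exact (isClosed_le (by simp only [P]; fun_prop) (by fun_prop)).union
        (isClosed_le (by simp only [P]; fun_prop) (by fun_prop))
  have hAc : IsCompact A := (isCompact_Icc.prod isCompact_Icc).inter_right hcl
  have hmemA : ∀ t s' (M' : J → Fin m), 0 ≤ t → t ≤ 1 → GF I (P t) r s' M' → cost (t, s') ≤ c0 →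
      (t, s') ∈ A := by
    intro t s' M' h0 h1 hG hc
    refine ⟨⟨⟨h0, h1⟩, ⟨fun j => hG.nonneg j, fun j => ?_⟩⟩, M', hG⟩
    refine le_trans ?_ hc
    have hj : s' j + P t j ≤ ∑ j, (s' j + P t j) :=
      Finset.single_le_sum (f := fun j => s' j + P t j)
        (fun k _ => add_nonneg (hG.nonneg k) (hPpos t h0 h1 k).le) (Finset.mem_univ j)
    have := hPpos t h0 h1 j
    show s' j ≤ ∑ j, (s' j + P t j)
    linarith
  -- the local improvement at time 0
  obtain ⟨e, he, hloc⟩ := local_family hp h ht (fun j => q j - p j)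
  obtain ⟨s1, hG1, hc1⟩ := hloc (min (e / 2) 1) (by
    rw [abs_of_pos (by positivity)]
    exact lt_of_le_of_lt (min_le_left _ _) (by linarith))
  have ht0 : 0 < min (e / 2) 1 := by positivity
  have hc1' : cost (min (e / 2) 1, s1) < c0 := by
    show ∑ j, (s1 j + (p j + min (e / 2) 1 * (q j - p j))) < c0
    rw [hc1]
    nlinarith
  have hx1 := hmemA _ s1 M ht0.le (min_le_right _ _) hG1 hc1'.le
  obtain ⟨x0, hx0, hmin0⟩ := hAc.exists_isMinOn ⟨_, hx1⟩ hcostc.continuousOn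
  have hmin : ∀ y ∈ A, cost x0 ≤ cost y := fun y hy => hmin0 hy
  let B : Set (ℝ × (J → ℝ)) := A ∩ {x | cost x ≤ cost x0}
  have hBc : IsCompact B := hAc.inter_right (isClosed_le hcostc continuous_const)
  obtain ⟨⟨τ, s2⟩, ⟨hx2, hx2c⟩, hmax0⟩ := hBc.exists_isMaxOn ⟨x0, hx0, le_refl (cost x0)⟩
    continuous_fst.continuousOn
  have hmax : ∀ y ∈ B, y.1 ≤ τ := fun y hy => hmax0 hy
  obtain ⟨⟨⟨hτ0, hτ1⟩, _⟩, M2, hG2⟩ := hx2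
  simp only at hτ0 hτ1 hG2
  simp only [Set.mem_ofPred_eq] at hx2c
  have hlt0 : cost (τ, s2) < c0 := lt_of_le_of_lt (hx2c.trans (hmin _ hx1)) hc1'
  have hτlt : τ < 1 := by
    rcases hτ1.lt_or_eq with h1 | h1
    · exact h1
    · exfalso
      subst h1
      have hP1 : P 1 = q := by ext j; simp [P]
      rw [hP1] at hG2
      have := hcon s2 M2 hG2
      simp only [cost, hP1] at hlt0
      linarith
  have hτgt : 0 < τ := by
    rcases hτ0.lt_or_eq with h1 | h1
    · exact h1
    · exfalso
      subst h1
      have hP1 : P 0 = p := by ext j; simp [P]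
      rw [hP1] at hG2
      have := h.2 s2 M2 hG2
      simp only [cost, hP1] at hlt0
      linarith
  obtain ⟨M3, hG3, hT3⟩ := exists_touch (hPpos τ hτ0 hτ1) hG2
  have hO3 : OptS I (P τ) r s2 M3 := by
    refine ⟨hG3, fun s' M' hG' => ?_⟩
    by_contra hlt
    push Not at hlt
    have := hmin _ (hmemA τ s' M' hτ0 hτ1 hG' (hlt.le.trans hlt0.le))
    have h5 : cost (τ, s') < cost (τ, s2) := hlt
    linarith
  obtain ⟨e', he', hloc'⟩ := local_family (hPpos τ hτ0 hτ1) hO3 hT3 (fun j => q j - p j)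
  set c' := ∑ j, (cnt s2 M3 j : ℝ) * (q j - p j)
  have hstep : ∀ u, |u| < e' → 0 ≤ τ + u → τ + u ≤ 1 → cost (τ, s2) + u * c' ≤ c0 →
      ∃ s', (τ + u, s') ∈ A ∧ cost (τ + u, s') = cost (τ, s2) + u * c' := by
    intro u hu h0 h1 hc
    obtain ⟨s', hG', hc'⟩ := hloc' u hu
    have hPP : (fun j => P τ j + u * (q j - p j)) = P (τ + u) := by
      ext j; simp only [P]; ring
    have hce : cost (τ + u, s') = cost (τ, s2) + u * c' := by
      rw [← hc']
      show ∑ j, (s' j + P (τ + u) j) = _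
      rw [← hPP]
    rw [hPP] at hG'
    exact ⟨s', hmemA _ s' M3 h0 h1 hG' (hce.trans_le hc), hce⟩
  have hcle : c' ≤ 0 ∨ 0 ≤ c' := le_total _ _
  set v := min (e' / 2) (min τ (1 - τ)) with hv
  have hv0 : 0 < v := by
    have : 0 < 1 - τ := by linarith
    positivity
  have hv1 : v ≤ e' / 2 := min_le_left _ _
  have hv2 : v ≤ τ := (min_le_right _ _).trans (min_le_left _ _)
  have hv3 : v ≤ 1 - τ := (min_le_right _ _).trans (min_le_right _ _)
  rcases hcle with hc | hc
  · obtain ⟨s', hA', hce⟩ := hstep v (by rw [abs_of_pos hv0]; linarith) (by linarith)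
      (by linarith) (by nlinarith)
    have hB : (τ + v, s') ∈ B := ⟨hA', by
      show cost (τ + v, s') ≤ cost x0
      rw [hce]; nlinarith⟩
    have := hmax _ hB
    simp only at this
    linarith
  · rcases hc.lt_or_eq with hc | hc
    · obtain ⟨s', hA', hce⟩ := hstep (-v) (by rw [abs_neg, abs_of_pos hv0]; linarith) (by linarith)
        (by linarith) (by nlinarith)
      have := hmin _ hA'
      nlinarith
    · obtain ⟨s', hA', hce⟩ := hstep v (by rw [abs_of_pos hv0]; linarith) (by linarith)
        (by linarith) (by rw [← hc]; linarith)
      have hB : (τ + v, s') ∈ B := ⟨hA', by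
        show cost (τ + v, s') ≤ cost x0
        rw [hce, ← hc]; linarith⟩
      have := hmax _ hB
      simp only at this
      linarith

lemma sum_split {J : Type} [Fintype J] (K Ini : J → Prop) (hIK : ∀ j, Ini j → K j)
    [DecidablePred K] [DecidablePred Ini] [Fintype {j // ¬ K j ∨ Ini j}]
    (c u z : J → ℝ) (g : {j // ¬ K j ∨ Ini j} → ℝ)
    (hg : ∀ x, g x = if K x.1 then z x.1 else u x.1) :
    ∑ j, (if K j then c j else u j) = ∑ j, (if K j then c j else 0) + ∑ x, g x
      - ∑ j, (if Ini j then z j else 0) := by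
  classical
  have h1 : ∑ x, g x = ∑ j, if (¬ K j ∨ Ini j) then (if K j then z j else u j) else 0 := by
    rw [← Finset.sum_filter]
    rw [Finset.sum_subtype (Finset.univ.filter (fun j => ¬ K j ∨ Ini j))
      (p := fun j => ¬ K j ∨ Ini j) (by simp)]
    exact Finset.sum_congr rfl (fun x _ => hg x)
  rw [h1, ← Finset.sum_add_distrib, ← Finset.sum_sub_distrib]
  refine Finset.sum_congr rfl (fun j _ => ?_)
  by_cases hK : K j <;> by_cases hI : Ini j
  · simp [hK, hI]
  · simp [hK, hI]
  · exact absurd (hIK j hI) hK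
  · simp [hK, hI]

lemma glue {J R : Type} [Fintype J] {m : ℕ} {p : J → ℝ} (hp : ∀ j, 0 < p j) {r : J → R}
    (K Ini : J → Prop) (hIK : ∀ j, Ini j → K j)
    [DecidablePred K] [DecidablePred Ini] [Fintype {j // ¬ K j ∨ Ini j}]
    (b : ℝ) (sb : J → ℝ) (Mb : J → Fin m) (z : J → ℝ)
    (h0 : ∀ j, K j → 0 ≤ sb j)
    (hd : ∀ j k, K j → K k → j ≠ k → (Mb j = Mb k ∨ r j = r k) →
      sb j + p j ≤ sb k ∨ sb k + p k ≤ sb j)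
    (ini : Fin m → J) (hini : ∀ k, Ini (ini k)) (hinj : Function.Injective ini)
    (hmach : ∀ j, K j → sb j + p j ≤ z (ini (Mb j)))
    (hres : ∀ j, K j → sb j + p j ≤ b ∨ (Ini j ∧ sb j + p j ≤ z j))
    (hzb : ∀ k, b ≤ z (ini k)) (hb : 0 < b)
    (σ : {j // ¬ K j ∨ Ini j} → ℝ) (μ : {j // ¬ K j ∨ Ini j} → Fin m)
    (hG : GF {x | K x.1} (fun x : {j // ¬ K j ∨ Ini j} => if K x.1 then z x.1 else p x.1)
      (fun x => r x.1) σ μ) :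
    ∃ (s' : J → ℝ) (M' : J → Fin m), GF ∅ p r s' M' ∧
      ∑ j, (s' j + p j) = ∑ j, (if K j then sb j + p j else 0)
        + ∑ x : {j // ¬ K j ∨ Ini j}, (σ x + if K x.1 then z x.1 else p x.1)
        - ∑ j, (if Ini j then z j else 0) := by
  classical
  let π : Fin m → Fin m := fun k => μ ⟨ini k, Or.inr (hini k)⟩
  have hσ0 : ∀ x : {j // ¬ K j ∨ Ini j}, K x.1 → σ x = 0 := fun x hx => hG.zeroStart x hx
  have hπ : Function.Injective π := by
    intro k l hkl
    by_contra hne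
    have hKk := hIK _ (hini k)
    have hKl := hIK _ (hini l)
    have := hG.disj ⟨ini k, Or.inr (hini k)⟩ ⟨ini l, Or.inr (hini l)⟩
      (by intro h; exact hne (hinj (congrArg Subtype.val h))) (Or.inl hkl)
    simp only [hKk, hKl, if_true] at this
    rw [hσ0 _ hKk, hσ0 _ hKl] at this
    have := hzb k
    have := hzb l
    rcases ‹_ ∨ _› with h | h <;> linarith
  have hsurj : Function.Surjective π := Finite.injective_iff_surjective.1 hπ
  have hafter : ∀ j (hj : ¬ K j) i (hi : Ini i),
      (μ ⟨j, Or.inl hj⟩ = μ ⟨i, Or.inr hi⟩ ∨ r j = r i) → 0 ≤ z i → z i ≤ σ ⟨j, Or.inl hj⟩ := by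
    intro j hj i hi hor hz
    have hKi := hIK i hi
    have hne : j ≠ i := by rintro rfl; exact hj hKi
    have := hG.disj ⟨j, Or.inl hj⟩ ⟨i, Or.inr hi⟩
      (by intro h; exact hne (congrArg Subtype.val h)) hor
    simp only [hKi, hj, if_true, if_false] at this
    rw [hσ0 ⟨i, Or.inr hi⟩ hKi] at this
    have h1 := hG.nonneg ⟨j, Or.inl hj⟩
    have h2 := hp j
    rcases this with h | h <;> linarith
  have htb : ∀ j (hj : ¬ K j), b ≤ σ ⟨j, Or.inl hj⟩ := by
    intro j hj
    obtain ⟨k, hk⟩ := hsurj (μ ⟨j, Or.inl hj⟩)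
    exact (hzb k).trans (hafter j hj (ini k) (hini k) (Or.inl hk.symm) (hb.le.trans (hzb k)))
  let s' : J → ℝ := fun j => if h : K j then sb j else σ ⟨j, Or.inl h⟩
  let M' : J → Fin m := fun j => if h : K j then π (Mb j) else μ ⟨j, Or.inl h⟩
  have hKs : ∀ j, K j → s' j = sb j := fun j h => by simp [s', h]
  have hKM : ∀ j, K j → M' j = π (Mb j) := fun j h => by simp [M', h]
  have hTs : ∀ j (h : ¬ K j), s' j = σ ⟨j, Or.inl h⟩ := fun j h => by simp [s', h]
  have hTM : ∀ j (h : ¬ K j), M' j = μ ⟨j, Or.inl h⟩ := fun j h => by simp [M', h]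
  have hmix : ∀ j k, K j → ¬ K k → (M' j = M' k ∨ r j = r k) → s' j + p j ≤ s' k := by
    intro j k hj hk hor
    rw [hKs j hj, hTs k hk]
    rw [hKM j hj, hTM k hk] at hor
    rcases hor with h | h
    · exact (hmach j hj).trans (hafter k hk _ (hini (Mb j)) (Or.inl h.symm) (hb.le.trans (hzb _)))
    · rcases hres j hj with h1 | ⟨h1, h2⟩
      · exact h1.trans (htb k hk)
      · refine h2.trans (hafter k hk j h1 (Or.inr h.symm) ?_)
        have := h0 j hj
        have := hp j
        linarith
  refine ⟨s', M', ⟨?_, by simp, ?_⟩, ?_⟩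
  · intro j
    by_cases hj : K j
    · rw [hKs j hj]; exact h0 j hj
    · rw [hTs j hj]; exact hG.nonneg _
  · intro j k hjk hor
    by_cases hj : K j <;> by_cases hk : K k
    · rw [hKs j hj, hKs k hk]
      rw [hKM j hj, hKM k hk] at hor
      exact hd j k hj hk hjk (hor.imp (fun h => hπ h) id)
    · exact Or.inl (hmix j k hj hk hor)
    · exact Or.inr (hmix k j hk hj (by tauto))
    · rw [hTM j hj, hTM k hk] at hor
      have := hG.disj ⟨j, Or.inl hj⟩ ⟨k, Or.inl hk⟩
        (by intro h; exact hjk (congrArg Subtype.val h)) hor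
      simp only [hj, hk, if_false] at this
      rwa [hTs j hj, hTs k hk]
  · rw [← sum_split K Ini hIK (fun j => sb j + p j) (fun j => s' j + p j) z]
    · refine Finset.sum_congr rfl (fun j _ => ?_)
      by_cases hj : K j
      · simp [hj, hKs j hj]
      · simp [hj]
    · rintro ⟨x, hx⟩
      by_cases hK : K x
      · simp [hK, hσ0 ⟨x, hx⟩ hK]
      · simp [hK, hTs x hK]

lemma cnt_lt {J : Type} [Fintype J] {m : ℕ} {s : J → ℝ} {M : J → Fin m} {i j : J}
    (hM : M i = M j) (hs : s i < s j) : cnt s M j < cnt s M i := by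
  classical
  apply Finset.card_lt_card
  rw [Finset.ssubset_iff_of_subset]
  · exact ⟨i, by simp, by simp [hs]⟩
  · intro k hk
    simp only [Finset.mem_filter, Finset.mem_univ, true_and] at hk ⊢
    exact ⟨hk.1.trans hM.symm, hs.le.trans hk.2⟩

/-- symmetry: a longer job does not have a larger count than a shorter one of its resource -/
lemma cnt_le {J R : Type} [Fintype J] {m : ℕ} {p : J → ℝ}
    (hp : ∀ j, 0 < p j) {r : J → R} {s : J → ℝ} {M : J → Fin m} (h : OptS ∅ p r s M)
    (ht : Touch p r s M) {L S : J} (hr : r L = r S) (hpp : p S < p L) :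
    cnt s M L ≤ cnt s M S := by
  classical
  by_contra hlt
  push Not at hlt
  have hne : L ≠ S := by rintro rfl; exact lt_irrefl _ hpp
  let e := Equiv.swap L S
  have hre : ∀ j, r (e j) = r j := by
    intro j
    simp only [e, Equiv.swap_apply_def]
    split_ifs with h1 h2
    · rw [h1, hr]
    · rw [h2, hr]
    · rfl
  obtain ⟨s', M', hG, hc⟩ := global_support (q := fun j => p (e j)) hp (fun j => hp _) h ht (by
    rw [Fintype.sum_eq_add L S hne]
    · simp only [e, Equiv.swap_apply_left, Equiv.swap_apply_right]
      have : (cnt s M S : ℝ) < cnt s M L := by exact_mod_cast hlt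
      nlinarith
    · rintro x ⟨h1, h2⟩
      simp [e, Equiv.swap_apply_of_ne_of_ne h1 h2])
  have hee : ∀ j, e (e j) = j := fun j => by simp [e]
  have hG' : GF ∅ p r (fun j => s' (e j)) (fun j => M' (e j)) := by
    refine ⟨fun j => hG.nonneg _, by simp, ?_⟩
    intro j k hjk hor
    have := hG.disj (e j) (e k) (fun h => hjk (e.injective h)) (by rwa [hre, hre])
    simpa only [hee] using this
  have h1 := h.2 _ _ hG'
  have h2 : ∑ j, (s' (e j) + p j) = ∑ j, (s' j + p (e j)) := by
    rw [← Equiv.sum_comp e (fun j => s' j + p (e j))]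
    simp only [hee]
  linarith

set_option maxHeartbeats 4000000 in
lemma main_aux {J R : Type} [Fintype J] {m : ℕ} {p : J → ℝ}
    (hp : ∀ j, 0 < p j) {r : J → R} {s : J → ℝ} {M : J → Fin m} (h : OptS ∅ p r s M)
    (ht : Touch p r s M) {L S : J} (hr : r L = r S) (hpp : p S < p L)
    (hLS : s L + p L ≤ s S)
    (hbet : ∀ x, r x = r S → s L < s x → ¬ s x < s S) : False := by
  classical
  have hcle := cnt_le hp h ht hr hpp
  obtain ⟨hG, hO⟩ := h
  have hpL := hp L
  have hpS := hp S
  have hsL := hG.nonneg L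
  obtain ⟨b, hb⟩ : ∃ b, b = s S := ⟨_, rfl⟩
  have hb0 : 0 < b := by linarith
  have hMne : M L ≠ M S := by
    intro hM
    have := cnt_lt (s := s) hM (by linarith)
    omega
  have hCL : s L + p L < b := by
    rw [hb]
    exact lt_of_le_of_ne hLS (fun he => hMne (ht L S hr he))
  -- generic: same machine or resource and earlier start
  have hord : ∀ x y, x ≠ y → (M x = M y ∨ r x = r y) → s x ≤ s y → s x + p x ≤ s y := by
    intro x y hxy hor hle
    have := hp y
    have := hp x
    rcases hG.disj x y hxy hor with h1 | h1 <;> linarith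
  have hR : ∀ x, r x = r S → s x < b → s x + p x ≤ s L + p L := by
    intro x hx hxb
    by_cases hxL : x = L
    · rw [hxL]
    · have : s x ≤ s L := by
        by_contra hlt
        exact hbet x hx (not_le.1 hlt) (by linarith)
      have := hord x L hxL (Or.inr (hx.trans hr.symm)) this
      linarith
  have hcover : ∀ k, k ≠ M S → ∃ x, M x = k ∧ s x < b ∧ b ≤ s x + p x := by
    intro k hk
    by_contra hcon
    push Not at hcon
    have hno : ∀ y, M y = k → s y < b := by
      intro y0 hy0
      by_contra hge
      push Not at hge
      obtain ⟨y, hy, hmin⟩ := Finset.exists_min_image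
        (Finset.univ.filter (fun y => M y = k ∧ b ≤ s y)) s ⟨y0, by simp [hy0, hge]⟩
      simp only [Finset.mem_filter, Finset.mem_univ, true_and] at hy hmin
      obtain ⟨x, hx, hxy⟩ := contig hp ⟨hG, hO⟩ ht y (by linarith)
      have hpx := hp x
      by_cases hxb : s x < b
      · have := hcon x (hx.trans hy.1) hxb
        linarith
      · have := hmin x ⟨hx.trans hy.1, not_lt.1 hxb⟩
        linarith
    obtain ⟨y, hy, hmax⟩ := Finset.exists_max_image
      (insert L (Finset.univ.filter (fun y => M y = k))) (fun y => s y + p y) ⟨L, by simp⟩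
    obtain ⟨β, hβ⟩ : ∃ β, β = s y + p y := ⟨_, rfl⟩
    have hβb : β < b := by
      simp only [Finset.mem_filter, Finset.mem_univ, true_and, Finset.mem_insert] at hy
      rcases hy with rfl | hy
      · linarith
      · have := hcon y hy (hno y hy)
        linarith
    have hβL : s L + p L ≤ β := by rw [hβ]; exact hmax L (by simp)
    have hβk : ∀ x, M x = k → s x + p x ≤ β := by
      intro x hx; rw [hβ]; exact hmax x (by simp [hx])
    have hone : ∀ x, x ≠ S → (M x = k ∨ r x = r S) → s x + p x ≤ β ∨ β + p S ≤ s x := by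
      intro x hx hor
      rcases hor with h1 | h1
      · exact Or.inl (hβk x h1)
      · by_cases hxb : s x < b
        · exact Or.inl ((hR x h1 hxb).trans hβL)
        · right
          have := hord S x (Ne.symm hx) (Or.inr h1.symm) (by linarith)
          linarith
    have hG' : GF ∅ p r (Function.update s S β) (Function.update M S k) := by
      refine ⟨?_, by simp, ?_⟩
      · intro x
        by_cases hx : x = S
        · subst hx; simp; linarith
        · simp [hx, hG.nonneg x]
      · intro x y hxy hor
        by_cases hx : x = S
        · subst hx
          have hy' : y ≠ x := Ne.symm hxy
          simp only [Function.update_self, Function.update_of_ne hy'] at hor ⊢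
          have := hone y hy' (hor.imp Eq.symm Eq.symm)
          tauto
        · by_cases hy' : y = S
          · subst hy'
            simp only [Function.update_self, Function.update_of_ne hx] at hor ⊢
            exact hone x hx hor
          · simp only [Function.update_of_ne hx, Function.update_of_ne hy'] at hor ⊢
            exact hG.disj x y hxy hor
    have hle := hO _ _ hG'
    have hlt : ∑ k, (Function.update s S β k + p k) < ∑ k, (s k + p k) := by
      apply Finset.sum_lt_sum
      · intro k _
        by_cases hk : k = S
        · subst hk; simp; linarith
        · simp [hk]
      · exact ⟨S, Finset.mem_univ _, by simp; linarith⟩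
    linarith
  let K : J → Prop := fun x => s x < b ∨ x = S
  have hKS : K S := Or.inr rfl
  have hKb : ∀ x, K x → s x ≤ b := by
    rintro x (hx | hx)
    · exact hx.le
    · rw [hx, hb]
  have hKlt : ∀ x, K x → x ≠ S → s x < b := fun x hx hxS => hx.resolve_right hxS
  have hnK : ∀ x, ¬ K x → b ≤ s x := by
    intro x hx
    by_contra hlt
    exact hx (Or.inl (not_le.1 hlt))
  have hexini : ∀ k, ∃ x, M x = k ∧ K x ∧ b ≤ s x + p x ∧ ∀ y, K y → M y = k → s y ≤ s x := by
    intro k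
    by_cases hk : k = M S
    · refine ⟨S, hk.symm, hKS, by linarith, fun y hy _ => ?_⟩
      have := hKb y hy
      linarith
    · obtain ⟨x, hx, hxb, hxc⟩ := hcover k hk
      refine ⟨x, hx, Or.inl hxb, hxc, fun y hy hyk => ?_⟩
      by_contra hlt
      push Not at hlt
      have hyS : y ≠ S := by rintro rfl; exact hk hyk.symm
      have := hKlt y hy hyS
      have := hord x y (by rintro rfl; exact lt_irrefl _ hlt) (Or.inl (hx.trans hyk.symm)) hlt.le
      linarith
  choose ini hiniM hiniK hiniC hiniMax using hexini
  have hinj : Function.Injective ini := by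
    intro k l hkl
    rw [← hiniM k, ← hiniM l, hkl]
  have heqs : ∀ x y, M x = M y → s x = s y → x = y := by
    intro x y hM hs
    by_contra hne
    have := hord x y hne (Or.inl hM) hs.le
    have := hp x
    linarith
  have hiniS : ini (M S) = S := by
    apply heqs _ _ (hiniM _)
    have h1 := hiniMax (M S) S hKS rfl
    have h2 := hKb _ (hiniK (M S))
    linarith
  let Ini : J → Prop := fun x => ini (M x) = x
  have hini : ∀ k, Ini (ini k) := by
    intro k
    show ini (M (ini k)) = ini k
    rw [hiniM]
  have hIK : ∀ x, Ini x → K x := by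
    intro x hx
    have hx' : ini (M x) = x := hx
    rw [← hx']; exact hiniK _
  have hIC : ∀ x, Ini x → b ≤ s x + p x := by
    intro x hx
    have hx' : ini (M x) = x := hx
    rw [← hx']; exact hiniC _
  -- committed jobs which are not last end by time `b`
  have hKnI : ∀ x, K x → ¬ Ini x → s x + p x ≤ s (ini (M x)) := by
    intro x hx hI
    exact hord x _ (fun h => hI h.symm) (Or.inl (hiniM _).symm) (hiniMax _ x hx rfl)
  have hKnIb : ∀ x, K x → ¬ Ini x → s x + p x ≤ b := fun x hx hI =>
    (hKnI x hx hI).trans (hKb _ (hiniK _))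
  obtain ⟨W, hW⟩ : ∃ W, W = ini (M L) := ⟨_, rfl⟩
  have hMW : M W = M L := by rw [hW, hiniM]
  have hWI : Ini W := by rw [hW]; exact hini _
  have hSI : Ini S := hiniS
  have hWS : W ≠ S := by rintro rfl; exact hMne hMW.symm
  have hKW : K W := hIK W hWI
  have hWC : b ≤ s W + p W := hIC W hWI
  have hWb : s W < b := hKlt W hKW hWS
  have hLW : L ≠ W := by rintro rfl; linarith
  have hKL : K L := Or.inl (by linarith)
  have hLW1 : s L ≤ s W := by rw [hW]; exact hiniMax _ L hKL rfl
  have hLW2 : s L + p L ≤ s W := hord L W hLW (Or.inl hMW.symm) hLW1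
  have hcW : cnt s M W < cnt s M S := lt_of_lt_of_le (cnt_lt hMW.symm (by linarith)) hcle
  have hrWS : r W ≠ r S := fun he => hbet W he (by linarith) (by linarith)
  have hpW := hp W
  obtain ⟨t, htd⟩ : ∃ t, t = min (p S) (b - s W) := ⟨_, rfl⟩
  have ht0 : 0 < t := by rw [htd]; exact lt_min hpS (by linarith)
  have htp : t ≤ p S := by rw [htd]; exact min_le_left _ _
  have htb : t ≤ b - s W := by rw [htd]; exact min_le_right _ _
  -- the reduced instance
  let z0 : J → ℝ := fun x => s x + p x
  let z1 : J → ℝ := fun x => if x = W then s x + p x + t else if x = S then s x + p x - t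
    else s x + p x
  have hz1W : z1 W = s W + p W + t := by simp [z1]
  have hz1S : z1 S = s S + p S - t := by simp [z1, hWS.symm]
  have hz1o : ∀ x, x ≠ W → x ≠ S → z1 x = s x + p x := by
    intro x h1 h2; simp [z1, h1, h2]
  let P0 : {j // ¬ K j ∨ Ini j} → ℝ := fun x => if K x.1 then z0 x.1 else p x.1
  let P1 : {j // ¬ K j ∨ Ini j} → ℝ := fun x => if K x.1 then z1 x.1 else p x.1
  let r' : {j // ¬ K j ∨ Ini j} → R := fun x => r x.1
  let s0 : {j // ¬ K j ∨ Ini j} → ℝ := fun x => if K x.1 then 0 else s x.1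
  let M0 : {j // ¬ K j ∨ Ini j} → Fin m := fun x => M x.1
  have hsub : ∀ x : {j // ¬ K j ∨ Ini j}, K x.1 → Ini x.1 := fun x hx => by
    rcases x.2 with h1 | h1
    · exact absurd hx h1
    · exact h1
  have hz1pos : ∀ x, Ini x → b ≤ z1 x := by
    intro x hx
    have h1 := hIC x hx
    by_cases hxW : x = W
    · rw [hxW, hz1W]; linarith
    · by_cases hxS : x = S
      · rw [hxS, hz1S]; linarith
      · rw [hz1o x hxW hxS]; exact h1
  have hP0 : ∀ x, 0 < P0 x := by
    intro x
    by_cases hx : K x.1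
    · have := hIC _ (hsub x hx)
      simp only [P0, hx, if_true, z0]; linarith
    · simp only [P0, hx, if_false]; exact hp _
  have hP1 : ∀ x, 0 < P1 x := by
    intro x
    by_cases hx : K x.1
    · have := hz1pos _ (hsub x hx)
      simp only [P1, hx, if_true]; linarith
    · simp only [P1, hx, if_false]; exact hp _
  have hG0 : GF {x | K x.1} P0 r' s0 M0 := by
    have hmix : ∀ x y : {j // ¬ K j ∨ Ini j}, K x.1 → ¬ K y.1 → (M x.1 = M y.1 ∨ r x.1 = r y.1) →
        s0 x + P0 x ≤ s0 y := by
      intro x y hx hy hor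
      simp only [s0, P0, hx, hy, if_true, if_false, z0, zero_add]
      have h1 := hKb _ hx
      have h2 := hnK _ hy
      exact hord _ _ (by intro he; rw [he] at hx; exact hy hx) hor (h1.trans h2)
    refine ⟨?_, ?_, ?_⟩
    · intro x
      by_cases hx : K x.1
      · simp [s0, hx]
      · simp only [s0, hx, if_false]; exact hG.nonneg _
    · intro x hx
      have hx' : K x.1 := hx
      simp [s0, hx']
    · intro x y hxy hor
      have hor' : M x.1 = M y.1 ∨ r x.1 = r y.1 := hor
      have hne : x.1 ≠ y.1 := fun he => hxy (Subtype.ext he)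
      by_cases hx : K x.1 <;> by_cases hy : K y.1
      · exfalso
        have hIx : ini (M x.1) = x.1 := hsub x hx
        have hIy : ini (M y.1) = y.1 := hsub y hy
        have hMxy : M x.1 ≠ M y.1 := by
          intro he
          apply hne
          rw [← hIx, ← hIy, he]
        have hrxy : r x.1 = r y.1 := hor'.resolve_left hMxy
        have key : ∀ u v, K v → Ini u → Ini v → r u = r v → M u ≠ M v → s u + p u ≤ s v → False := by
          intro u v hv hu hv' hruv hMuv hle
          have h1 := hIC u hu
          have h2 := hKb v hv
          exact hMuv (ht u v hruv (le_antisymm hle (by linarith)))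
        rcases hG.disj _ _ hne hor' with h1 | h1
        · exact key _ _ hy hIx hIy hrxy hMxy h1
        · exact key _ _ hx hIy hIx hrxy.symm hMxy.symm h1
      · exact Or.inl (hmix x y hx hy hor')
      · exact Or.inr (hmix y x hy hx (by tauto))
      · simp only [s0, P0, hx, hy, if_false]
        exact hG.disj _ _ hne hor'
  have hT0 : Touch P0 r' s0 M0 := by
    intro x y hrxy hxy
    have hrxy' : r x.1 = r y.1 := hrxy
    have hPx := hP0 x
    have hsx := hG0.nonneg x
    by_cases hy : K y.1
    · exfalso
      have : s0 y = 0 := by simp [s0, hy]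
      linarith
    · have h1 : s0 y = s y.1 := by simp [s0, hy]
      have h2 : s0 x + P0 x = s x.1 + p x.1 := by
        by_cases hx : K x.1 <;> simp [s0, P0, hx, z0]
      exact ht x.1 y.1 hrxy' (by rw [← h1, ← h2, hxy])
  have hsum0 := sum_split K Ini hIK (fun j => s j + p j) (fun j => s j + p j) z0
    (fun x => s0 x + P0 x) (by
      intro x
      by_cases hx : K x.1 <;> simp [s0, P0, hx])
  simp only [ite_self] at hsum0
  have hO0 : OptS {x | K x.1} P0 r' s0 M0 := by
    refine ⟨hG0, fun σ μ hσ => ?_⟩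
    obtain ⟨s', M', hG', hc'⟩ := glue hp K Ini hIK b s M z0 (fun j _ => hG.nonneg j)
      (fun j k _ _ hjk hor => hG.disj j k hjk hor) ini hini hinj
      (by
        intro j hj
        by_cases hI : Ini j
        · have hI' : ini (M j) = j := hI
          rw [hI']
        · have := hKnI j hj hI
          have := hp (ini (M j))
          simp only [z0]; linarith)
      (by
        intro j hj
        by_cases hI : Ini j
        · exact Or.inr ⟨hI, le_rfl⟩
        · exact Or.inl (hKnIb j hj hI))
      hiniC hb0 σ μ hσ
    have h1 := hO _ _ hG'
    simp only [P0] at hsum0 ⊢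
    linarith
  have hcnt : ∀ x (hx : Ini x), cnt s0 M0 ⟨x, Or.inr hx⟩ = cnt s M x := by
    intro x hx
    have hKx := hIK x hx
    have hx' : ini (M x) = x := hx
    unfold cnt
    rw [← Finset.card_image_of_injective _ Subtype.val_injective]
    congr 1
    ext k
    simp only [Finset.mem_image, Finset.mem_filter, Finset.mem_univ, true_and]
    constructor
    · rintro ⟨⟨k', hk'⟩, ⟨h1, h2⟩, rfl⟩
      have h1' : M k' = M x := h1
      refine ⟨h1', ?_⟩
      by_cases hK : K k'
      · have hk'' : ini (M k') = k' := hsub ⟨k', hk'⟩ hK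
        have : k' = x := by rw [← hk'', h1', hx']
        exact (congrArg s this).ge
      · exact (hKb x hKx).trans (hnK k' hK)
    · rintro ⟨h1, h2⟩
      have hk : ¬ K k ∨ Ini k := by
        by_cases hK : K k
        · right
          have h3 := hiniMax (M x) k hK h1
          rw [hx'] at h3
          have : k = x := heqs k x h1 (le_antisymm h3 h2)
          rw [this]; exact hx
        · exact Or.inl hK
      refine ⟨⟨k, hk⟩, ⟨h1, ?_⟩, rfl⟩
      have h3 : s0 ⟨x, Or.inr hx⟩ = 0 := by simp [s0, hKx]
      rw [h3]; exact hG0.nonneg _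
  obtain ⟨σ, μ, hGσ, hcσ⟩ := global_support hP0 hP1 hO0 hT0 (by
    rw [Fintype.sum_eq_add ⟨W, Or.inr hWI⟩ ⟨S, Or.inr hSI⟩
      (by intro he; exact hWS (congrArg Subtype.val he))]
    · rw [hcnt W hWI, hcnt S hSI]
      have h1 : P1 ⟨W, Or.inr hWI⟩ - P0 ⟨W, Or.inr hWI⟩ = t := by
        simp only [P1, P0, hKW, if_true, hz1W, z0]; ring
      have h2 : P1 ⟨S, Or.inr hSI⟩ - P0 ⟨S, Or.inr hSI⟩ = -t := by
        simp only [P1, P0, hKS, if_true, hz1S, z0]; ring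
      rw [h1, h2]
      have : (cnt s M W : ℝ) < cnt s M S := by exact_mod_cast hcW
      nlinarith
    · rintro ⟨x, hx⟩ ⟨h1, h2⟩
      have h1' : x ≠ W := fun he => h1 (Subtype.ext he)
      have h2' : x ≠ S := fun he => h2 (Subtype.ext he)
      have : P1 ⟨x, hx⟩ = P0 ⟨x, hx⟩ := by
        simp only [P1, P0, z0, hz1o x h1' h2']
      rw [this]; ring)
  -- the modified committed part
  let sb : J → ℝ := fun x => if x = W then s W + t else if x = S then s W else s x
  have hsbW : sb W = s W + t := by simp [sb]
  have hsbS : sb S = s W := by simp [sb, hWS.symm]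
  have hsbo : ∀ x, x ≠ W → x ≠ S → sb x = s x := by
    intro x h1 h2; simp [sb, h1, h2]
  have hKoW : ∀ x, K x → x ≠ W → M x = M W → s x + p x ≤ s W := by
    intro x hx hxW hM
    have hiW : ini (M W) = W := hWI
    have h1 := hiniMax (M W) x hx hM
    rw [hiW] at h1
    exact hord x W hxW (Or.inl hM) h1
  have hKoS : ∀ x, K x → x ≠ S → M x = M S → s x + p x ≤ b := by
    intro x hx hxS hM
    have := hord x S hxS (Or.inl hM) (by have := hKb x hx; linarith)
    linarith
  have key : ∃ (Mb : J → Fin m) (ini' : Fin m → J), (∀ x, x ≠ W → x ≠ S → Mb x = M x) ∧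
      Mb S = M W ∧ (∀ k, Ini (ini' k)) ∧ Function.Injective ini' ∧
      (∀ x, K x → x ≠ W → x ≠ S → Mb x = Mb W → s x + p x ≤ s W + t) ∧
      (Mb S = Mb W → s W + p S ≤ s W + t) ∧
      (∀ j, K j → sb j + p j ≤ z1 (ini' (Mb j))) ∧
      (s W + p S ≤ b ∨ s W + p S ≤ z1 S) := by
    have hiW : ini (M W) = W := hWI
    have hMWS : M W ≠ M S := by rw [hMW]; exact hMne
    have hother : ∀ j, K j → j ≠ W → j ≠ S → M j ≠ M W → M j ≠ M S →
        s j + p j ≤ z1 (ini (M j)) := by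
      intro j hj hjW hjS h1 h2
      have h3 : ini (M j) ≠ W := by
        intro he; apply h1; rw [← he, hiniM]
      have h4 : ini (M j) ≠ S := by
        intro he; apply h2; rw [← he, hiniM]
      rw [hz1o _ h3 h4]
      by_cases hI : Ini j
      · have hI' : ini (M j) = j := hI
        rw [hI']
      · have := hKnI j hj hI
        have := hp (ini (M j))
        linarith
    rcases le_total (p S) (b - s W) with hc | hc
    · have htS : t = p S := by rw [htd]; exact min_eq_left hc
      refine ⟨Function.update M S (M W), ini, ?_, ?_, hini, hinj, ?_, ?_, ?_, ?_⟩
      · intro x _ hx; simp [hx]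
      · simp
      · intro x hx hxW hxS hM
        rw [Function.update_of_ne hxS, Function.update_of_ne hWS] at hM
        have := hKoW x hx hxW hM
        linarith
      · intro _; linarith
      · intro j hj
        by_cases hjS : j = S
        · subst hjS
          rw [Function.update_self, hiW, hsbS, hz1W]; linarith
        · rw [Function.update_of_ne hjS]
          by_cases hjW : j = W
          · subst hjW
            rw [hiW, hsbW, hz1W]; linarith
          · rw [hsbo j hjW hjS]
            by_cases h1 : M j = M W
            · rw [h1, hiW, hz1W]
              have := hKoW j hj hjW h1
              linarith
            · by_cases h2 : M j = M S
              · rw [h2, hiniS, hz1S]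
                have := hKoS j hj hjS h2
                linarith
              · exact hother j hj hjW hjS h1 h2
      · left; linarith
    · have htS : t = b - s W := by rw [htd]; exact min_eq_right hc
      refine ⟨fun x => if x = W then M S else if x = S then M W else M x,
        fun k => ini (Equiv.swap (M W) (M S) k), ?_, ?_, fun k => hini _,
        hinj.comp (Equiv.injective _), ?_, ?_, ?_, ?_⟩
      · intro x h1 h2; simp [h1, h2]
      · simp [hWS.symm]
      · intro x hx hxW hxS hM
        simp only [hxW, hxS, if_true, if_false] at hM
        have := hKoS x hx hxS hM
        linarith
      · intro he
        simp only [hWS.symm, if_true, if_false] at he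
        exact absurd he hMWS
      · intro j hj
        by_cases hjW : j = W
        · subst hjW
          simp only [if_true]
          rw [Equiv.swap_apply_right, hiW, hsbW, hz1W]; linarith
        · by_cases hjS : j = S
          · subst hjS
            simp only [hjW, if_true, if_false]
            rw [Equiv.swap_apply_left, hiniS, hsbS, hz1S]; linarith
          · simp only [hjW, hjS, if_false]
            rw [hsbo j hjW hjS]
            by_cases h1 : M j = M W
            · rw [h1, Equiv.swap_apply_left, hiniS, hz1S]
              have := hKoW j hj hjW h1
              linarith
            · by_cases h2 : M j = M S
              · rw [h2, Equiv.swap_apply_right, hiW, hz1W]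
                have := hKoS j hj hjS h2
                linarith
              · rw [Equiv.swap_apply_of_ne_of_ne h1 h2]
                exact hother j hj hjW hjS h1 h2
      · right; rw [hz1S]; linarith
  obtain ⟨Mb, ini', hMbo, hMbS, hini', hinj', hMbW, hMbSW, hmach, hresS⟩ := key
  -- each other committed job ends before the new positions of `S` and `W`
  have hdS : ∀ x, K x → x ≠ W → x ≠ S → (Mb x = Mb S ∨ r x = r S) → sb x + p x ≤ sb S := by
    intro x hx hxW hxS hor
    rw [hsbo x hxW hxS, hsbS]
    rw [hMbo x hxW hxS, hMbS] at hor
    rcases hor with h1 | h1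
    · exact hKoW x hx hxW h1
    · exact (hR x h1 (hKlt x hx hxS)).trans hLW2
  have hdW : ∀ x, K x → x ≠ W → x ≠ S → (Mb x = Mb W ∨ r x = r W) → sb x + p x ≤ sb W := by
    intro x hx hxW hxS hor
    rw [hsbo x hxW hxS, hsbW]
    rcases hor with h1 | h1
    · exact hMbW x hx hxW hxS h1
    · have := hKlt x hx hxS
      rcases hG.disj x W hxW (Or.inr h1) with h2 | h2 <;> linarith
  have hdSW : (Mb S = Mb W ∨ r S = r W) → sb S + p S ≤ sb W := by
    rintro (h1 | h1)
    · rw [hsbS, hsbW]; exact hMbSW h1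
    · exact absurd h1.symm hrWS
  obtain ⟨s', M', hG', hc'⟩ := glue hp K Ini hIK b sb Mb z1
    (by
      intro j _
      by_cases hjW : j = W
      · rw [hjW, hsbW]; linarith [hG.nonneg W]
      · by_cases hjS : j = S
        · rw [hjS, hsbS]; exact hG.nonneg W
        · rw [hsbo j hjW hjS]; exact hG.nonneg j)
    (by
      intro j k hj hk hjk hor
      have hor' : Mb k = Mb j ∨ r k = r j := hor.imp Eq.symm Eq.symm
      by_cases hjW : j = W
      · subst hjW
        by_cases hkS : k = S
        · subst hkS; exact Or.inr (hdSW hor')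
        · exact Or.inr (hdW k hk (Ne.symm hjk) hkS hor')
      · by_cases hjS : j = S
        · subst hjS
          by_cases hkW : k = W
          · subst hkW; exact Or.inl (hdSW hor)
          · exact Or.inr (hdS k hk hkW (Ne.symm hjk) hor')
        · by_cases hkW : k = W
          · subst hkW; exact Or.inl (hdW j hj hjW hjS hor)
          · by_cases hkS : k = S
            · subst hkS; exact Or.inl (hdS j hj hjW hjS hor)
            · rw [hsbo j hjW hjS, hsbo k hkW hkS]
              rw [hMbo j hjW hjS, hMbo k hkW hkS] at hor
              exact hG.disj j k hjk hor)
    ini' hini' hinj' hmach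
    (by
      intro j hj
      by_cases hjW : j = W
      · right
        rw [hjW]
        refine ⟨hWI, ?_⟩
        rw [hsbW, hz1W]; linarith
      · by_cases hjS : j = S
        · rw [hjS, hsbS]
          exact hresS.imp id (fun h1 => ⟨hSI, h1⟩)
        · rw [hsbo j hjW hjS]
          by_cases hI : Ini j
          · right
            exact ⟨hI, (hz1o j hjW hjS).ge⟩
          · exact Or.inl (hKnIb j hj hI))
    (fun k => hz1pos _ (hini' k)) hb0 σ μ hGσ
  have hfin := hO _ _ hG'
  have hA : ∑ j, (if K j then sb j + p j else 0) - ∑ j, (if K j then s j + p j else 0)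
      = t + (s W - b) := by
    rw [← Finset.sum_sub_distrib, Fintype.sum_eq_add W S hWS]
    · simp only [hKW, hKS, if_true, hsbW, hsbS]; linarith
    · rintro x ⟨h1, h2⟩
      rw [hsbo x h1 h2]; ring
  have hB : ∑ j, (if Ini j then z1 j else 0) - ∑ j, (if Ini j then z0 j else 0) = 0 := by
    rw [← Finset.sum_sub_distrib, Fintype.sum_eq_add W S hWS]
    · simp only [hWI, hSI, if_true, hz1W, hz1S, z0]; ring
    · rintro x ⟨h1, h2⟩
      rw [hz1o x h1 h2]; simp [z0]
  simp only [P1] at hcσ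
  linarith

/-- In an optimal schedule for `P|partition|ΣC_j`, all jobs sharing the same
resource are processed in SPT order: if `r j = r j'` and `p j < p j'` then
`C j < C j'`. -/
theorem optimal_spt_order_per_resource {J R : Type} [Fintype J]
    (m : ℕ) (hm : 1 ≤ m) (p : J → ℝ) (hp : ∀ j, 0 < p j) (r : J → R)
    (s : J → ℝ) (M : J → Fin m) (hfeas : Feasible m p r s M)
    (hopt : ∀ (s' : J → ℝ) (M' : J → Fin m), Feasible m p r s' M' →
      ∑ j, (s j + p j) ≤ ∑ j, (s' j + p j)) :
    ∀ j j' : J, r j = r j' → p j < p j' → s j + p j < s j' + p j' := by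
  classical
  have hG := (feasible_iff hp).1 hfeas
  obtain ⟨M1, hG1, hT⟩ := exists_touch hp hG
  have hO : OptS ∅ p r s M1 := ⟨hG1, fun s' M' h => hopt s' M' ((feasible_iff hp).2 h)⟩
  intro j j' hr hpp
  by_contra hcon
  push Not at hcon
  have hbad : s j' < s j := by linarith
  obtain ⟨⟨L, S⟩, hmem, hmin⟩ := Finset.exists_min_image
    (Finset.univ.filter (fun x : J × J => r x.1 = r x.2 ∧ p x.2 < p x.1 ∧ s x.1 < s x.2))
    (fun x => s x.2 - s x.1) ⟨(j', j), by simp [hr, hpp, hbad]⟩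
  simp only [Finset.mem_filter, Finset.mem_univ, true_and, Prod.forall] at hmem hmin
  obtain ⟨h1, h2, h3⟩ := hmem
  refine main_aux hp hO hT h1 h2 ?_ ?_
  · have := hp S
    have hne : L ≠ S := by rintro rfl; exact lt_irrefl _ h3
    rcases hG1.disj L S hne (Or.inr h1) with h4 | h4 <;> linarith
  · intro x hx hLx hxS
    by_cases hpx : p x < p L
    · have := hmin L x ⟨h1.trans hx.symm, hpx, hLx⟩
      linarith
    · have := hmin x S ⟨hx, by linarith, hxS⟩
      linarith
end

section
/- Let (m, b, A) be an instance of 3-PARTITION and set N_C = 2mb and C = 8mb. Construct the instance of P|partition, M_r|ΣC_j with 2m machines and the following jobs: for each a ∈ A, a job of processing time a with its own unique resource whose allowed machine set is {1,…,m}; for each i ∈ {1,…,m}: N_C jobs of processing time C, all with resource i whose allowed machine set is {i, m+i}; one job of processing time b with resource i; and one job of processing time N_C²·C with its own unique resource whose allowed machine set is {m+i}. Let Z⁺ = mb + m·(N_C·b + (C + N_C·C)·N_C/2) + m·(b + N_C²·C) + 2mb. Then (m, b, A) is a yes-instance of 3-PARTITION if and only if the constructed scheduling instance has a feasible schedule with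 total completion time at most Z⁺. -/
/-- Feasibility for `P|partition, M_r|ΣC_j`: the schedule is feasible and every
job is assigned to a machine allowed for its resource. -/
def FeasibleMr {J R : Type} (m : ℕ) (p : J → ℝ) (r : J → R)
    (allowed : R → Set (Fin m)) (s : J → ℝ) (M : J → Fin m) : Prop :=
  Feasible m p r s M ∧ ∀ j, M j ∈ allowed (r j)

/-- A 3-PARTITION instance `(m, b, a)` is a yes-instance: the `3m` integers can
be partitioned into `m` triples each summing to `b`. -/
def ThreePartitionYes (m b : ℕ) (a : Fin (3 * m) → ℕ) : Prop :=
  ∃ f : Fin (3 * m) → Fin m, ∀ i : Fin m,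
    (Finset.univ.filter (fun k => f k = i)).card = 3 ∧
    ∑ k ∈ Finset.univ.filter (fun k => f k = i), a k = b

/-- Jobs of the reduction: the `a`-jobs, the `C`-jobs (`N_C = 2mb` per
machine-index `i`), the release-date jobs and the `D`-jobs. -/
abbrev J11 (m b : ℕ) : Type :=
  Fin (3 * m) ⊕ (Fin m × Fin (2 * m * b)) ⊕ Fin m ⊕ Fin m

/-- Resources of the reduction: a unique resource for each `a`-job, one resource
`i` shared by the `C`-jobs and release-date job of index `i`, and a unique
resource for each `D`-job. -/
abbrev R11 (m : ℕ) : Type := Fin (3 * m) ⊕ Fin m ⊕ Fin m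

/-- Processing times of the reduction, with `N_C = 2mb` and `C = 8mb`:
the `a`-job of index `k` has processing time `a k`, each `C`-job has processing
time `C`, each release-date job has processing time `b`, and each `D`-job has
processing time `N_C² · C`. -/
def p11 (m b : ℕ) (a : Fin (3 * m) → ℕ) : J11 m b → ℝ
  | Sum.inl k => a k
  | Sum.inr (Sum.inl _) => 8 * m * b
  | Sum.inr (Sum.inr (Sum.inl _)) => b
  | Sum.inr (Sum.inr (Sum.inr _)) => (2 * m * b : ℕ) ^ 2 * (8 * m * b : ℕ)

/-- Resource assignment of the reduction. -/
def r11 (m b : ℕ) : J11 m b → R11 m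
  | Sum.inl k => Sum.inl k
  | Sum.inr (Sum.inl q) => Sum.inr (Sum.inl q.1)
  | Sum.inr (Sum.inr (Sum.inl i)) => Sum.inr (Sum.inl i)
  | Sum.inr (Sum.inr (Sum.inr i)) => Sum.inr (Sum.inr i)

/-- Allowed machines of the reduction (out of `2m` machines): resources of
`a`-jobs may use machines `0,…,m-1`; resource `i` (of the `C`-jobs and release
job `i`) may use machines `i` and `m+i`; the resource of `D`-job `i` may only
use machine `m+i`. -/
def allowed11 (m : ℕ) : R11 m → Set (Fin (2 * m))
  | Sum.inl _ => {x | (x : ℕ) < m}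
  | Sum.inr (Sum.inl i) => {x | (x : ℕ) = (i : ℕ) ∨ (x : ℕ) = m + (i : ℕ)}
  | Sum.inr (Sum.inr i) => {x | (x : ℕ) = m + (i : ℕ)}

/-- The threshold `Z⁺ = mb + m(N_C·b + (C + N_C·C)·N_C/2) + m(b + N_C²·C) + 2mb`
with `N_C = 2mb` and `C = 8mb`. -/
noncomputable def Zplus (m b : ℕ) : ℝ :=
  m * b +
    m * ((2 * m * b : ℕ) * b +
      ((8 * m * b : ℕ) + (2 * m * b : ℕ) * (8 * m * b : ℕ)) * (2 * m * b : ℕ) / 2) +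
    m * (b + ((2 * m * b : ℕ) : ℝ) ^ 2 * (8 * m * b : ℕ)) + 2 * m * b

lemma sep_of_disjoint {s p s' p' : ℝ} (hp : 0 < p) (hp' : 0 < p')
    (h : Disjoint (Set.Ico s (s + p)) (Set.Ico s' (s' + p'))) :
    s + p ≤ s' ∨ s' + p' ≤ s := by
  rw [Set.Ico_disjoint_Ico, min_le_iff, le_max_iff, le_max_iff] at h
  rcases h with (h | h) | (h | h)
  · linarith
  · exact Or.inl h
  · exact Or.inr h
  · linarith

lemma disjoint_of_sep {s p s' p' : ℝ} (h : s + p ≤ s' ∨ s' + p' ≤ s) :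
    Disjoint (Set.Ico s (s + p)) (Set.Ico s' (s' + p')) := by
  rw [Set.Ico_disjoint_Ico, min_le_iff, le_max_iff, le_max_iff]
  tauto

/-- Packing: disjoint intervals inside `[T, U)` have total length at most `U - T`. -/
lemma packing {ι : Type*} [DecidableEq ι] (s p : ι → ℝ) (T : ℝ) :
    ∀ (n : ℕ) (F : Finset ι) (U : ℝ), F.card = n → T ≤ U → (∀ j ∈ F, 0 < p j) →
      (∀ j ∈ F, T ≤ s j) → (∀ j ∈ F, s j + p j ≤ U) →
      (∀ j ∈ F, ∀ k ∈ F, j ≠ k → s j + p j ≤ s k ∨ s k + p k ≤ s j) →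
      T + ∑ j ∈ F, p j ≤ U := by
  intro n
  induction n with
  | zero =>
    intro F U hF hTU _ _ _ _
    rw [Finset.card_eq_zero] at hF
    subst hF
    simpa using hTU
  | succ n ih =>
    intro F U hF hTU hp hT hU hsep
    have hne : F.Nonempty := by
      rw [← Finset.card_pos]; omega
    obtain ⟨j, hj, hmax⟩ := Finset.exists_max_image F s hne
    have h1 := ih (F.erase j) (s j) (by rw [Finset.card_erase_of_mem hj]; omega) (hT j hj)
      (fun k hk => hp k (Finset.mem_of_mem_erase hk))
      (fun k hk => hT k (Finset.mem_of_mem_erase hk))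
      (fun k hk => by
        have hkF := Finset.mem_of_mem_erase hk
        rcases hsep k hkF j hj (Finset.ne_of_mem_erase hk) with h | h
        · exact h
        · have := hmax k hkF
          have := hp j hj
          linarith)
      (fun k hk l hl => hsep k (Finset.mem_of_mem_erase hk) l (Finset.mem_of_mem_erase hl))
    have h2 := Finset.add_sum_erase F p hj
    have h3 := hU j hj
    linarith

/-- Total completion time of equal jobs of length `C` on one resource, starting at `T`. -/
lemma equal_jobs {ι : Type*} [DecidableEq ι] (s : ι → ℝ) (C T : ℝ) (hC : 0 < C) :
    ∀ (n : ℕ) (F : Finset ι), F.card = n →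
      (∀ j ∈ F, T ≤ s j) →
      (∀ j ∈ F, ∀ k ∈ F, j ≠ k → s j + C ≤ s k ∨ s k + C ≤ s j) →
      n * T + C * n * (n + 1) / 2 ≤ ∑ j ∈ F, (s j + C) := by
  intro n
  induction n with
  | zero =>
    intro F hF _ _
    rw [Finset.card_eq_zero] at hF
    subst hF
    simp
  | succ n ih =>
    intro F hF hT hsep
    have hne : F.Nonempty := by
      rw [← Finset.card_pos]; omega
    obtain ⟨j, hj, hmax⟩ := Finset.exists_max_image F s hne
    have hcard : (F.erase j).card = n := by rw [Finset.card_erase_of_mem hj]; omega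
    have h1 := ih (F.erase j) hcard
      (fun k hk => hT k (Finset.mem_of_mem_erase hk))
      (fun k hk l hl => hsep k (Finset.mem_of_mem_erase hk) l (Finset.mem_of_mem_erase hl))
    have h2 := packing s (fun _ => C) T n (F.erase j) (s j) hcard (hT j hj)
      (fun k hk => hC)
      (fun k hk => hT k (Finset.mem_of_mem_erase hk))
      (fun k hk => by
        have hkF := Finset.mem_of_mem_erase hk
        rcases hsep k hkF j hj (Finset.ne_of_mem_erase hk) with h | h
        · exact h
        · have := hmax k hkF
          linarith)
      (fun k hk l hl => hsep k (Finset.mem_of_mem_erase hk) l (Finset.mem_of_mem_erase hl))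
    rw [Finset.sum_const, hcard, nsmul_eq_mul] at h2
    have h3 := Finset.add_sum_erase F (fun k => s k + C) hj
    rw [← h3]
    push_cast
    nlinarith

/-- Lower bound for the `C`-jobs together with the release-date job of one resource. -/
lemma resource_bound {N : ℕ} (s : Fin N → ℝ) (t C b : ℝ) (hC : 0 < C) (hb : 0 < b)
    (ht : 0 ≤ t) (hs : ∀ q, 0 ≤ s q)
    (hsep : ∀ q q', q ≠ q' → s q + C ≤ s q' ∨ s q' + C ≤ s q)
    (hbs : ∀ q, s q + C ≤ t ∨ t + b ≤ s q) :
    C * N * (N + 1) / 2 + N * b + b +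
      ((Finset.univ.filter (fun q => s q + C ≤ t)).card : ℝ) * (C - b) ≤
      ∑ q, (s q + C) + (t + b) := by
  set F := Finset.univ.filter (fun q => s q + C ≤ t) with hF
  set G := Finset.univ.filter (fun q => ¬ s q + C ≤ t) with hG
  have hcard : F.card + G.card = N := by
    rw [hF, hG, Finset.card_filter_add_card_filter_not]
    simp
  have hsum : ∑ q ∈ F, (s q + C) + ∑ q ∈ G, (s q + C) = ∑ q, (s q + C) :=
    Finset.sum_filter_add_sum_filter_not _ _ _
  have h1 := equal_jobs s C 0 hC _ F rfl (fun q _ => hs q) (fun q _ q' _ => hsep q q')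
  have h2 := packing s (fun _ => C) 0 _ F t rfl ht (fun _ _ => hC) (fun q _ => hs q)
    (fun q hq => (Finset.mem_filter.1 hq).2) (fun q _ q' _ => hsep q q')
  rw [Finset.sum_const, nsmul_eq_mul] at h2
  have h3 := equal_jobs s C (t + b) hC _ G rfl
    (fun q hq => (hbs q).resolve_left (Finset.mem_filter.1 hq).2) (fun q _ q' _ => hsep q q')
  rw [← hsum]
  have hN : (N : ℝ) = F.card + G.card := by exact_mod_cast hcard.symm
  rw [hN]
  have hg : (0 : ℝ) ≤ G.card := by positivity
  nlinarith [mul_le_mul_of_nonneg_left h2 hg]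

/-- Three jobs of total length `b` can be sequenced with total start time at most `b`. -/
lemma seq_three {ι : Type*} [DecidableEq ι] (F : Finset ι) (a : ι → ℕ) (b : ℕ)
    (hF : F.card = 3) (hsum : ∑ k ∈ F, a k = b) :
    ∃ s : ι → ℝ, (∀ k, 0 ≤ s k) ∧ (∀ k ∈ F, s k + a k ≤ b) ∧
      (∀ j ∈ F, ∀ k ∈ F, j ≠ k → s j + a j ≤ s k ∨ s k + a k ≤ s j) ∧
      ∑ k ∈ F, s k ≤ b := by
  have key : ∀ x y z : ι, x ≠ y → x ≠ z → y ≠ z → F = {x, y, z} → a x ≤ a z →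
    ∃ s : ι → ℝ, (∀ k, 0 ≤ s k) ∧ (∀ k ∈ F, s k + a k ≤ b) ∧
      (∀ j ∈ F, ∀ k ∈ F, j ≠ k → s j + a j ≤ s k ∨ s k + a k ≤ s j) ∧
      ∑ k ∈ F, s k ≤ b := by
    intro x y z hxy hxz hyz hFe hle
    subst hFe
    rw [Finset.sum_insert (by simp [hxy, hxz]), Finset.sum_pair hyz] at hsum
    have hle' : (a x : ℝ) ≤ a z := by exact_mod_cast hle
    have hsum' : (a x : ℝ) + (a y + a z) = b := by exact_mod_cast hsum
    have h0 : ∀ k, (0 : ℝ) ≤ a k := fun k => by positivity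
    have hx0 := h0 x
    have hy0 := h0 y
    have hz0 := h0 z
    refine ⟨fun k => if k = x then 0 else if k = y then a x else a x + a y, ?_, ?_, ?_, ?_⟩
    · intro k
      dsimp only
      split_ifs <;> linarith
    · intro k hk
      simp only [Finset.mem_insert, Finset.mem_singleton] at hk
      rcases hk with rfl | rfl | rfl
      · simp; linarith
      · simp [hxy.symm]; linarith
      · simp [hxz.symm, hyz.symm]; linarith
    · intro j hj k hk hjk
      simp only [Finset.mem_insert, Finset.mem_singleton] at hj hk
      rcases hj with rfl | rfl | rfl <;> rcases hk with rfl | rfl | rfl <;>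
        simp_all [hxy.symm, hxz.symm, hyz.symm]
    · rw [Finset.sum_insert (by simp [hxy, hxz]), Finset.sum_pair hyz]
      simp [hxy.symm, hxz.symm, hyz.symm]
      linarith
  obtain ⟨x, y, z, hxy, hxz, hyz, hFe⟩ := Finset.card_eq_three.1 hF
  rcases le_total (a x) (a z) with h | h
  · exact key x y z hxy hxz hyz hFe h
  · refine key z y x hyz.symm hxz.symm hxy.symm ?_ h
    rw [hFe]
    ext k
    simp only [Finset.mem_insert, Finset.mem_singleton]
    tauto

/-- If all groups have sum `b`, the groups can be rearranged to have three elements each. -/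
lemma rearrange (m b : ℕ) (hb : 0 < b) (a : Fin (3 * m) → ℕ)
    (hbounds : ∀ k, b ≤ 4 * a k ∧ 2 * a k ≤ b) :
    ∀ (n : ℕ) (f : Fin (3 * m) → Fin m),
      (∀ i, ∑ k ∈ Finset.univ.filter (fun k => f k = i), a k = b) →
      (Finset.univ.filter
        (fun i => (Finset.univ.filter (fun k => f k = i)).card ≠ 3)).card = n →
      ThreePartitionYes m b a := by
  intro n
  induction n using Nat.strong_induction_on with
  | _ n ih =>
  intro f hf hn
  by_cases hall : ∀ i, (Finset.univ.filter (fun k => f k = i)).card = 3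
  · exact ⟨f, fun i => ⟨hall i, hf i⟩⟩
  have hlow : ∀ i, 2 ≤ (Finset.univ.filter (fun k => f k = i)).card := by
    intro i
    by_contra hlt
    have h1 : ∑ k ∈ Finset.univ.filter (fun k => f k = i), 2 * a k ≤
        ∑ k ∈ Finset.univ.filter (fun k => f k = i), b :=
      Finset.sum_le_sum fun k _ => (hbounds k).2
    rw [← Finset.mul_sum, hf i, Finset.sum_const, smul_eq_mul] at h1
    have : (Finset.univ.filter (fun k => f k = i)).card ≤ 1 := by omega
    nlinarith
  have hhigh : ∀ i, (Finset.univ.filter (fun k => f k = i)).card ≤ 4 := by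
    intro i
    by_contra hlt
    have h1 : ∑ k ∈ Finset.univ.filter (fun k => f k = i), b ≤
        ∑ k ∈ Finset.univ.filter (fun k => f k = i), 4 * a k :=
      Finset.sum_le_sum fun k _ => (hbounds k).1
    rw [← Finset.mul_sum, hf i, Finset.sum_const, smul_eq_mul] at h1
    have : 5 ≤ (Finset.univ.filter (fun k => f k = i)).card := by omega
    nlinarith
  have htot : ∑ i, (Finset.univ.filter (fun k => f k = i)).card = ∑ i : Fin m, 3 := by
    rw [← Finset.card_eq_sum_card_fiberwise (fun k _ => by simp)]
    simp [mul_comm]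
  have hex2 : ∃ i, (Finset.univ.filter (fun k => f k = i)).card = 2 := by
    by_contra hno
    push Not at hno
    apply hall
    have hge : ∀ i ∈ (Finset.univ : Finset (Fin m)),
        3 ≤ (Finset.univ.filter (fun k => f k = i)).card := by
      intro i _
      have := hlow i
      have := hno i
      omega
    have := (Finset.sum_eq_sum_iff_of_le hge).1 htot.symm
    intro i
    exact (this i (Finset.mem_univ i)).symm
  have hex4 : ∃ i, (Finset.univ.filter (fun k => f k = i)).card = 4 := by
    by_contra hno
    push Not at hno
    apply hall
    have hge : ∀ i ∈ (Finset.univ : Finset (Fin m)),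
        (Finset.univ.filter (fun k => f k = i)).card ≤ 3 := by
      intro i _
      have := hhigh i
      have := hno i
      omega
    have := (Finset.sum_eq_sum_iff_of_le hge).1 htot
    intro i
    exact this i (Finset.mem_univ i)
  obtain ⟨i, hi⟩ := hex2
  obtain ⟨j, hj⟩ := hex4
  have hij : i ≠ j := by
    rintro rfl
    omega
  have hsi := hf i
  have hsj := hf j
  obtain ⟨x, y, hxy, hFi⟩ := Finset.card_eq_two.1 hi
  obtain ⟨u, v, w, z, huv, huw, huz, hvw, hvz, hwz, hFj⟩ := Finset.card_eq_four.1 hj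
  have hmi : ∀ k, f k = i ↔ k = x ∨ k = y := by
    intro k
    have := Finset.ext_iff.1 hFi k
    simpa using this
  have hmj : ∀ k, f k = j ↔ k = u ∨ k = v ∨ k = w ∨ k = z := by
    intro k
    have := Finset.ext_iff.1 hFj k
    simpa using this
  rw [hFi, Finset.sum_pair hxy] at hsi
  rw [hFj, Finset.sum_insert (by simp [huv, huw, huz]), Finset.sum_insert (by simp [hvw, hvz]),
    Finset.sum_pair hwz] at hsj
  have hfx : f x = i := (hmi x).2 (by simp)
  have hfy : f y = i := (hmi y).2 (by simp)
  have hfu : f u = j := (hmj u).2 (by simp)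
  have hfv : f v = j := (hmj v).2 (by simp)
  have hfw : f w = j := (hmj w).2 (by simp)
  have hfz : f z = j := (hmj z).2 (by simp)
  have hne : ∀ k l, f k = i → f l = j → k ≠ l := by
    rintro k l hk hl rfl
    exact hij (hk.symm.trans hl)
  have hyu := hne y u hfy hfu
  have hyv := hne y v hfy hfv
  have hxu := hne x u hfx hfu
  have hxv := hne x v hfx hfv
  have hxw := hne x w hfx hfw
  have hxz := hne x z hfx hfz
  let g : Fin (3 * m) → Fin m := fun k =>
    if k = x then j else if k = u ∨ k = v then i else f k
  have hgi : Finset.univ.filter (fun k => g k = i) = {y, u, v} := by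
    ext k
    simp only [g, Finset.mem_filter, Finset.mem_univ, true_and, Finset.mem_insert,
      Finset.mem_singleton]
    have := hmi k
    split_ifs <;> grind
  have hgj : Finset.univ.filter (fun k => g k = j) = {x, w, z} := by
    ext k
    simp only [g, Finset.mem_filter, Finset.mem_univ, true_and, Finset.mem_insert,
      Finset.mem_singleton]
    have := hmj k
    split_ifs <;> grind
  have hgo : ∀ l, l ≠ i → l ≠ j → Finset.univ.filter (fun k => g k = l) =
      Finset.univ.filter (fun k => f k = l) := by
    intro l hli hlj
    ext k
    simp only [g, Finset.mem_filter, Finset.mem_univ, true_and]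
    split_ifs <;> grind
  have hci : (Finset.univ.filter (fun k => g k = i)).card = 3 := by
    rw [hgi]; exact Finset.card_eq_three.2 ⟨y, u, v, hyu, hyv, huv, rfl⟩
  have hcj : (Finset.univ.filter (fun k => g k = j)).card = 3 := by
    rw [hgj]; exact Finset.card_eq_three.2 ⟨x, w, z, hxw, hxz, hwz, rfl⟩
  have bx := hbounds x
  have b_y := hbounds y
  have bu := hbounds u
  have bv := hbounds v
  have bw := hbounds w
  have bz := hbounds z
  refine ih _ ?_ g ?_ rfl
  · rw [← hn]
    apply Finset.card_lt_card
    rw [Finset.ssubset_iff_of_subset]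
    · refine ⟨i, ?_, ?_⟩
      · simp [hi]
      · simp [hci]
    · intro l
      simp only [Finset.mem_filter, Finset.mem_univ, true_and]
      intro hl
      by_cases hli : l = i
      · subst hli; exact absurd hci hl
      by_cases hlj : l = j
      · subst hlj; exact absurd hcj hl
      rwa [hgo l hli hlj] at hl
  · intro l
    by_cases hli : l = i
    · subst hli
      rw [hgi, Finset.sum_insert (by simp [hyu, hyv]), Finset.sum_pair huv]
      omega
    by_cases hlj : l = j
    · subst hlj
      rw [hgj, Finset.sum_insert (by simp [hxw, hxz]), Finset.sum_pair hwz]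
      omega
    rw [hgo l hli hlj]
    exact hf l

lemma forward_dir (m b : ℕ) (hm : 0 < m) (hb : 0 < b)
    (a : Fin (3 * m) → ℕ)
    (hsum : ∑ k, a k = m * b) (h : ThreePartitionYes m b a) :
      ∃ (s : J11 m b → ℝ) (M : J11 m b → Fin (2 * m)),
        FeasibleMr (2 * m) (p11 m b a) (r11 m b) (allowed11 m) s M ∧
        ∑ j, (s j + p11 m b a j) ≤ Zplus m b := by
  obtain ⟨f, hf⟩ := h
  have hseq := fun i => seq_three (Finset.univ.filter (fun k => f k = i)) a b (hf i).1 (hf i).2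
  choose S hS0 hSb hSsep hSsum using hseq
  let s : J11 m b → ℝ
    | Sum.inl k => S (f k) k
    | Sum.inr (Sum.inl q) => b + (q.2 : ℕ) * (8 * m * b)
    | Sum.inr (Sum.inr (Sum.inl _)) => 0
    | Sum.inr (Sum.inr (Sum.inr _)) => b
  let M : J11 m b → Fin (2 * m)
    | Sum.inl k => ⟨f k, by have := (f k).2; omega⟩
    | Sum.inr (Sum.inl q) => ⟨q.1, by have := q.1.2; omega⟩
    | Sum.inr (Sum.inr (Sum.inl i)) => ⟨m + i, by have := i.2; omega⟩
    | Sum.inr (Sum.inr (Sum.inr i)) => ⟨m + i, by have := i.2; omega⟩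
  have hend : ∀ k, S (f k) k + a k ≤ b := fun k => hSb (f k) k (by simp)
  have hb0 : (0 : ℝ) < b := by exact_mod_cast hb
  have hm0 : (0 : ℝ) < m := by exact_mod_cast hm
  have hC0 : (0 : ℝ) < 8 * m * b := by positivity
  have hq0 : ∀ q : ℕ, (0 : ℝ) ≤ q * (8 * m * b) := fun q => by positivity
  refine ⟨s, M, ⟨⟨?_, ?_⟩, ?_⟩, ?_⟩
  · rintro (k | q | i | i)
    · exact hS0 _ _
    · have := hq0 q.2
      simp only [s]; linarith
    · exact le_refl _
    · exact hb0.le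
  · have main : ∀ j j' : J11 m b, j ≠ j' → (M j = M j' ∨ r11 m b j = r11 m b j') →
        s j + p11 m b a j ≤ s j' ∨ s j' + p11 m b a j' ≤ s j := by
      rintro (k | ⟨i, q⟩ | i | i) (k' | ⟨i', q'⟩ | i' | i') hne hMr <;>
        simp only [s, M, r11, p11, ne_eq, Sum.inl.injEq, Sum.inr.injEq, Fin.mk.injEq,
          reduceCtorEq, or_false, false_or, Prod.mk.injEq, not_false_eq_true] at hne hMr ⊢
      · have hk : f k = f k' := by
          rcases hMr with h | h
          · exact Fin.ext h
          · exact absurd h hne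
        have := hSsep (f k) k (by simp) k' (by simp [hk]) hne
        rwa [← hk]
      · left
        have := hend k
        have := hq0 q'
        linarith
      · have := (f k).2
        omega
      · have := (f k).2
        omega
      · right
        have := hend k'
        have := hq0 q
        linarith
      · have hi : i = i' := by
          rcases hMr with h | h
          · exact Fin.ext h
          · exact h
        have hqne : (q : ℕ) ≠ q' := by
          intro hq
          exact hne ⟨hi, Fin.ext hq⟩
        rcases lt_or_gt_of_ne hqne with h | h
        · left
          have h1 : ((q : ℕ) : ℝ) + 1 ≤ (q' : ℕ) := by exact_mod_cast h
          nlinarith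
        · right
          have h1 : ((q' : ℕ) : ℝ) + 1 ≤ (q : ℕ) := by exact_mod_cast h
          nlinarith
      · right
        have := hq0 q
        linarith
      · have := i.2
        omega
      · have := (f k').2
        omega
      · left
        have := hq0 q'
        linarith
      · exfalso
        rcases hMr with h | h
        · exact hne (Fin.ext (by omega))
        · exact hne h
      · left
        linarith
      · have := (f k').2
        omega
      · have := i'.2
        omega
      · right
        linarith
      · exfalso
        rcases hMr with h | h
        · exact hne (Fin.ext (by omega))
        · exact hne h
    intro j j' hne hMr
    exact disjoint_of_sep (main j j' hne hMr)
  · rintro (k | q | i | i) <;> simp [M, r11, allowed11]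
  · have hA : ∑ k, S (f k) k ≤ m * b := by
      rw [← Finset.sum_fiberwise Finset.univ f (fun k => S (f k) k)]
      calc _ ≤ ∑ i : Fin m, (b : ℝ) := by
            apply Finset.sum_le_sum
            intro i _
            refine le_trans (le_of_eq ?_) (hSsum i)
            apply Finset.sum_congr rfl
            intro k hk
            rw [(Finset.mem_filter.1 hk).2]
        _ = _ := by simp
    have hsum' : ∑ k, (a k : ℝ) = m * b := by exact_mod_cast hsum
    have hgauss : ∀ N : ℕ, ∑ q : Fin N, ((q : ℕ) : ℝ) = N * (N - 1) / 2 := by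
      intro N
      rw [Fin.sum_univ_eq_sum_range (fun q => (q : ℝ))]
      induction N with
      | zero => simp
      | succ N ih =>
        rw [Finset.sum_range_succ, ih]
        push_cast
        ring
    rw [Fintype.sum_sum_type, Fintype.sum_sum_type, Fintype.sum_sum_type,
      Fintype.sum_prod_type]
    simp only [s, p11, Finset.sum_add_distrib, Finset.sum_const, Finset.card_univ,
      Fintype.card_fin, nsmul_eq_mul, ← Finset.sum_mul, hgauss, hsum', Zplus]
    push_cast
    nlinarith [hA]

lemma backward_dir (m b : ℕ) (hm : 0 < m) (hb : 0 < b)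
    (a : Fin (3 * m) → ℕ) (ha : ∀ k, 0 < a k)
    (hbounds : ∀ k, b ≤ 4 * a k ∧ 2 * a k ≤ b)
    (hsum : ∑ k, a k = m * b)
    (s : J11 m b → ℝ) (M : J11 m b → Fin (2 * m))
    (hfeas : FeasibleMr (2 * m) (p11 m b a) (r11 m b) (allowed11 m) s M)
    (hcost : ∑ j, (s j + p11 m b a j) ≤ Zplus m b) : ThreePartitionYes m b a := by
  obtain ⟨⟨hs0, hdis⟩, hal⟩ := hfeas
  have hb1 : (1 : ℝ) ≤ b := by exact_mod_cast hb
  have hm1 : (1 : ℝ) ≤ m := by exact_mod_cast hm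
  have hmb : (b : ℝ) ≤ m * b := by nlinarith
  have hppos : ∀ j, 0 < p11 m b a j := by
    rintro (k | q | i | i) <;> simp only [p11]
    · exact_mod_cast ha k
    all_goals positivity
  have hsep : ∀ j j' : J11 m b, j ≠ j' → (M j = M j' ∨ r11 m b j = r11 m b j') →
      s j + p11 m b a j ≤ s j' ∨ s j' + p11 m b a j' ≤ s j := fun j j' h h' =>
    sep_of_disjoint (hppos j) (hppos j') (hdis j j' h h')
  let sa : Fin (3 * m) → ℝ := fun k => s (Sum.inl k)
  let sc : Fin m → Fin (2 * m * b) → ℝ := fun i q => s (Sum.inr (Sum.inl (i, q)))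
  let sb : Fin m → ℝ := fun i => s (Sum.inr (Sum.inr (Sum.inl i)))
  let sd : Fin m → ℝ := fun i => s (Sum.inr (Sum.inr (Sum.inr i)))
  have hsa : ∀ k, 0 ≤ sa k := fun k => hs0 _
  have hsc : ∀ i q, 0 ≤ sc i q := fun i q => hs0 _
  have hsb : ∀ i, 0 ≤ sb i := fun i => hs0 _
  have hsd : ∀ i, 0 ≤ sd i := fun i => hs0 _
  obtain ⟨C, hC⟩ : ∃ C : ℝ, C = 8 * m * b := ⟨_, rfl⟩
  obtain ⟨N, hN⟩ : ∃ N : ℝ, N = 2 * m * b := ⟨_, rfl⟩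
  have hNcast : ((2 * m * b : ℕ) : ℝ) = N := by rw [hN]; push_cast; ring
  have hCcast : ((8 * m * b : ℕ) : ℝ) = C := by rw [hC]; push_cast; ring
  have hN2 : 2 ≤ N := by rw [hN]; nlinarith
  have hCN : C = 4 * N := by rw [hC, hN]; ring
  have hbN : 2 * (b : ℝ) ≤ N := by rw [hN]; linarith
  have hCpos : 0 < C := by linarith
  have hcc : ∀ i q q', q ≠ q' → sc i q + C ≤ sc i q' ∨ sc i q' + C ≤ sc i q := by
    intro i q q' hq
    have := hsep (Sum.inr (Sum.inl (i, q))) (Sum.inr (Sum.inl (i, q'))) (by simpa using hq)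
      (Or.inr rfl)
    simpa only [p11, ← hC] using this
  have hcb : ∀ i q, sc i q + C ≤ sb i ∨ sb i + b ≤ sc i q := by
    intro i q
    have := hsep (Sum.inr (Sum.inl (i, q))) (Sum.inr (Sum.inr (Sum.inl i))) (by simp)
      (Or.inr rfl)
    simpa only [p11, ← hC] using this
  let X : Fin m → ℝ := fun i => ∑ q, (sc i q + C) + (sb i + b)
  let B : ℝ := C * N * (N + 1) / 2 + N * b + b
  have hX : ∀ i, B + ((Finset.univ.filter (fun q => sc i q + C ≤ sb i)).card : ℝ) * (C - b)
      ≤ X i := by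
    intro i
    have := resource_bound (sc i) (sb i) C b hCpos (by linarith) (hsb i) (hsc i) (hcc i) (hcb i)
    rwa [hNcast] at this
  have hCb : 0 < C - b := by linarith
  have hXB : ∀ i, 0 ≤ X i - B := by
    intro i
    have h1 := hX i
    have : 0 ≤ ((Finset.univ.filter (fun q => sc i q + C ≤ sb i)).card : ℝ) * (C - b) := by
      positivity
    linarith
  have hsum' : ∑ k, (a k : ℝ) = m * b := by exact_mod_cast hsum
  have hbudget : ∑ i, (X i - B) + ∑ i, sd i + ∑ k, sa k ≤ N := by
    rw [Fintype.sum_sum_type, Fintype.sum_sum_type, Fintype.sum_sum_type,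
      Fintype.sum_prod_type] at hcost
    simp only [p11, Zplus, hNcast, hCcast, ← hC] at hcost
    have e1 : ∑ k, (s (Sum.inl k) + (a k : ℝ)) = ∑ k, sa k + m * b := by
      rw [Finset.sum_add_distrib, hsum']
    have e2 : ∑ i, (s (Sum.inr (Sum.inr (Sum.inr i))) + N ^ 2 * C) =
        ∑ i, sd i + m * (N ^ 2 * C) := by
      rw [Finset.sum_add_distrib]
      simp [sd]
    have e3 : ∑ i, (X i - B) =
        ∑ i, ∑ q, (s (Sum.inr (Sum.inl (i, q))) + C) +
          ∑ i, (s (Sum.inr (Sum.inr (Sum.inl i))) + (b : ℝ)) - m * B := by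
      rw [Finset.sum_sub_distrib, Finset.sum_add_distrib]
      simp [sc, sb]
    rw [e1, e2] at hcost
    rw [e3]
    simp only [B]
    have e4 : 2 * (m : ℝ) * b = N := hN.symm
    nlinarith
  have hMa : ∀ k, (M (Sum.inl k) : ℕ) < m := fun k => hal (Sum.inl k)
  let f : Fin (3 * m) → Fin m := fun k => ⟨M (Sum.inl k), hMa k⟩
  have hfM : ∀ k k', f k = f k' → M (Sum.inl k) = M (Sum.inl k') := by
    intro k k' h
    exact Fin.ext (Fin.mk.inj h)
  have haa : ∀ k k', k ≠ k' → f k = f k' → sa k + a k ≤ sa k' ∨ sa k' + a k' ≤ sa k := by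
    intro k k' hk hf
    exact hsep (Sum.inl k) (Sum.inl k') (by simpa using hk) (Or.inl (hfM k k' hf))
  have hapos : 0 < ∑ k, sa k := by
    apply lt_of_le_of_ne (Finset.sum_nonneg fun k _ => hsa k)
    intro h0
    have hz := (Finset.sum_eq_zero_iff_of_nonneg fun k _ => hsa k).1 h0.symm
    obtain ⟨k, k', hk, hf⟩ := Fintype.exists_ne_map_eq_of_card_lt f (by simp; omega)
    have z1 := hz k (Finset.mem_univ _)
    have z2 := hz k' (Finset.mem_univ _)
    have p1 : (0 : ℝ) < a k := by exact_mod_cast ha k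
    have p2 : (0 : ℝ) < a k' := by exact_mod_cast ha k'
    rcases haa k k' hk hf with h | h <;> linarith
  have hXsum : 0 ≤ ∑ i, (X i - B) := Finset.sum_nonneg fun i _ => hXB i
  have hdsum : 0 ≤ ∑ i, sd i := Finset.sum_nonneg fun i _ => hsd i
  have hXlt : ∀ i, X i - B < N := by
    intro i
    have := Finset.single_le_sum (f := fun i => X i - B) (fun i _ => hXB i) (Finset.mem_univ i)
    linarith
  have hdlt : ∀ i, sd i < N := by
    intro i
    have := Finset.single_le_sum (f := sd) (fun i _ => hsd i) (Finset.mem_univ i)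
    linarith
  have halt : ∀ k, sa k ≤ N := by
    intro k
    have := Finset.single_le_sum (f := sa) (fun i _ => hsa i) (Finset.mem_univ k)
    linarith
  have hbC : ∀ i q, sb i + b ≤ sc i q := by
    intro i q
    refine (hcb i q).resolve_left fun hq => ?_
    have h1 : (1 : ℝ) ≤ ((Finset.univ.filter (fun q => sc i q + C ≤ sb i)).card : ℝ) := by
      have : 0 < (Finset.univ.filter (fun q => sc i q + C ≤ sb i)).card :=
        Finset.card_pos.2 ⟨q, by simp [hq]⟩
      exact_mod_cast this
    have h2 := hX i
    have h3 := hXlt i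
    nlinarith
  have hMc : ∀ i q, (M (Sum.inr (Sum.inl (i, q))) : ℕ) = i := by
    intro i q
    have h1 : (M (Sum.inr (Sum.inl (i, q))) : ℕ) = i ∨
        (M (Sum.inr (Sum.inl (i, q))) : ℕ) = m + i := hal (Sum.inr (Sum.inl (i, q)))
    refine h1.resolve_right fun h2 => ?_
    have h3 : (M (Sum.inr (Sum.inr (Sum.inr i))) : ℕ) = m + i :=
      hal (Sum.inr (Sum.inr (Sum.inr i)))
    have h4 := hsep (Sum.inr (Sum.inl (i, q))) (Sum.inr (Sum.inr (Sum.inr i))) (by simp)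
      (Or.inl (Fin.ext (h2.trans h3.symm)))
    simp only [p11, hNcast, hCcast, ← hC] at h4
    have h5 := hdlt i
    have h6 := hsd i
    have h7 := hsc i q
    simp only [sd, sc] at h5 h6 h7
    rcases h4 with h4 | h4
    · linarith
    · have h8 := Finset.single_le_sum (f := fun q => sc i q + C)
        (fun q _ => by have := hsc i q; linarith) (Finset.mem_univ q)
      have h9 := hXlt i
      have h10 := hsb i
      simp only [X, B, sc] at h8 h9
      have h11 : N ^ 2 * C ≤ C * N * (N + 1) / 2 + N * b + N := by linarith
      rw [hCN] at h11
      have h12 : N * b ≤ N * (N / 2) := by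
        apply mul_le_mul_of_nonneg_left <;> linarith
      have h13 : 2 * N ^ 2 ≤ N ^ 3 := by nlinarith [sq_nonneg N]
      nlinarith
  have hSle : ∀ i, ∑ k ∈ Finset.univ.filter (fun k => f k = i), a k ≤ b := by
    intro i
    by_contra hlt
    have hge : (b : ℝ) + 1 ≤ ∑ k ∈ Finset.univ.filter (fun k => f k = i), (a k : ℝ) := by
      have : b + 1 ≤ ∑ k ∈ Finset.univ.filter (fun k => f k = i), a k := by omega
      exact_mod_cast this
    have hstart : ∀ q, (b : ℝ) + 1 ≤ sc i q := by
      intro q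
      have := packing sa (fun k => (a k : ℝ)) 0 _ (Finset.univ.filter (fun k => f k = i))
        (sc i q) rfl (hsc i q) (fun k _ => by exact_mod_cast ha k) (fun k _ => hsa k)
        (fun k hk => by
          have hk' : f k = i := (Finset.mem_filter.1 hk).2
          have h1 := hsep (Sum.inl k) (Sum.inr (Sum.inl (i, q))) (by simp)
            (Or.inl (Fin.ext (by rw [hMc i q, ← hk'])))
          simp only [p11, ← hC] at h1
          refine h1.resolve_right fun h2 => ?_
          have h3 := halt k
          have h4 := hsc i q
          simp only [sa, sc] at h3 h4
          linarith)
        (fun k hk k' hk' hne => haa k k' hne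
          ((Finset.mem_filter.1 hk).2.trans (Finset.mem_filter.1 hk').2.symm))
      linarith
    have h1 := equal_jobs (sc i) C (b + 1) hCpos _ Finset.univ rfl (fun q _ => hstart q)
      (fun q _ q' _ => hcc i q q')
    rw [Finset.card_univ, Fintype.card_fin, hNcast] at h1
    have h2 := hXlt i
    have h3 := hsb i
    simp only [X, B] at h2
    linarith
  have hSeq : ∀ i, ∑ k ∈ Finset.univ.filter (fun k => f k = i), a k = b := by
    have htot : ∑ i, ∑ k ∈ Finset.univ.filter (fun k => f k = i), a k = ∑ i : Fin m, b := by
      rw [Finset.sum_fiberwise, hsum]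
      simp
    intro i
    exact (Finset.sum_eq_sum_iff_of_le fun i _ => hSle i).1 htot i (Finset.mem_univ i)
  exact rearrange m b hb a hbounds _ f hSeq rfl

/-- `P|partition, M_r|ΣC_j` is NP-hard: `(m, b, a)` is a yes-instance of
3-PARTITION if and only if the constructed scheduling instance on `2m` machines
has a feasible schedule of total completion time at most `Z⁺`. -/
theorem threePartition_iff_schedule_Mr (m b : ℕ) (hm : 0 < m) (hb : 0 < b)
    (a : Fin (3 * m) → ℕ) (ha : ∀ k, 0 < a k)
    (hbounds : ∀ k, b ≤ 4 * a k ∧ 2 * a k ≤ b)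
    (hsum : ∑ k, a k = m * b) :
    ThreePartitionYes m b a ↔
      ∃ (s : J11 m b → ℝ) (M : J11 m b → Fin (2 * m)),
        FeasibleMr (2 * m) (p11 m b a) (r11 m b) (allowed11 m) s M ∧
        ∑ j, (s j + p11 m b a j) ≤ Zplus m b := by
  constructor
  · exact forward_dir m b hm hb a hsum
  · rintro ⟨s, M, hfeas, hcost⟩
    exact backward_dir m b hm hb a ha hbounds hsum s M hfeas hcost
end
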